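/- arXiv:1002.1552 — 3 statements merged into one kernel-verified Lean document; each statement's English description precedes it below -/
import Mathlib

section
/- For every ε > 0 there is a constant C_ε > 0 such that the following holds. Let G be an abelian group, let A ⊆ G be a finite nonempty set, and let K ≥ 1 be a real number with |A + A| ≤ K|A|. Then there exist an integer d ≤ C_ε·K^{4+ε}, a finite subgroup H ≤ G, and finite arithmetic progressions P₁, …, P_d ⊆ G such that, with M := H + P₁ + ⋯ + P_d, we have A ⊆ M and |M| ≤ exp(C_ε·K^{4+ε})·|A|. -/
open Pointwise

open MeasureTheory Module in
theorem card_le_of_deformed_separated {n : ℕ}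
    (e : OrthonormalBasis (Fin n) ℝ (EuclideanSpace ℝ (Fin n)))
    (w : Fin n → ℝ) {R : ℝ} (hR : 0 < R) (hw : ∀ k, 0 < w k) (hwR : ∀ k, w k ≤ R)
    (S : Finset (EuclideanSpace ℝ (Fin n))) (hS : ∀ x ∈ S, ‖x‖ ≤ R)
    (hsep : ∀ x ∈ S, ∀ y ∈ S, x ≠ y → 1 ≤ ∑ k, (e.repr (x - y) k / w k) ^ 2) :
    (S.card : ℝ) ≤ 3 ^ n * ∏ k, (R / w k) := by
  classical
  let T : (EuclideanSpace ℝ (Fin n)) →ₗ[ℝ] (EuclideanSpace ℝ (Fin n)) :=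
    Matrix.toLin e.toBasis e.toBasis (Matrix.diagonal fun k => (w k)⁻¹)
  have hTrepr : ∀ x k, e.repr (T x) k = e.repr x k / w k := by
    intro x k
    have h := Matrix.repr_toLin e.toBasis e.toBasis (Matrix.diagonal fun k => (w k)⁻¹) x
    have h2 := congrFun h k
    simp only [OrthonormalBasis.coe_toBasis_repr_apply] at h2
    change (e.repr (T x)) k = _ at h2
    rw [h2, Matrix.mulVec_diagonal]
    simp [div_eq_inv_mul]
  have hTnorm : ∀ x, ‖T x‖ ^ 2 = ∑ k, (e.repr x k / w k) ^ 2 := by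
    intro x
    rw [← e.repr.norm_map, EuclideanSpace.norm_sq_eq]
    simp only [hTrepr, Real.norm_eq_abs, sq_abs]
  have hdet : LinearMap.det T = ∏ k, (w k)⁻¹ := by
    simp [T]
  have hdetpos : 0 < ∏ k, (w k)⁻¹ := Finset.prod_pos fun k _ => inv_pos.2 (hw k)
  have hRT : ∀ x, ‖x‖ ≤ R * ‖T x‖ := by
    intro x
    refine le_of_sq_le_sq ?_ (by positivity)
    rw [mul_pow, hTnorm, ← e.repr.norm_map, EuclideanSpace.norm_sq_eq, Finset.mul_sum]
    refine Finset.sum_le_sum fun k _ => ?_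
    rw [Real.norm_eq_abs, sq_abs, ← mul_pow, ← sq_abs, ← sq_abs (R * _)]
    have : |e.repr x k| ≤ |R * (e.repr x k / w k)| := by
      rw [abs_mul, abs_div, abs_of_pos hR, abs_of_pos (hw k), ← mul_div_assoc,
        le_div_iff₀ (hw k), mul_comm]
      exact mul_le_mul_of_nonneg_right (hwR k) (abs_nonneg _)
    gcongr
  let V : Set (EuclideanSpace ℝ (Fin n)) := T ⁻¹' Metric.ball 0 (1 / 2)
  have hVmeas : MeasurableSet V :=
    (T.continuous_of_finiteDimensional.measurable) measurableSet_ball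
  have hdisj : Set.PairwiseDisjoint (S : Set (EuclideanSpace ℝ (Fin n))) (fun y => y +ᵥ V) := by
    intro x hx y hy hxy
    refine Set.disjoint_left.2 ?_
    rintro _ ⟨a, ha, rfl⟩ ⟨b, hb, hab⟩
    simp only [V, Set.mem_preimage, mem_ball_zero_iff] at ha hb
    have h1 := hsep x hx y hy hxy
    rw [← hTnorm] at h1
    have h2 : x - y = b - a := by
      simp only [vadd_eq_add] at hab
      rw [sub_eq_sub_iff_add_eq_add, ← hab]; abel
    rw [h2, map_sub] at h1
    have h3 : ‖T b - T a‖ < 1 := (norm_sub_le _ _).trans_lt (by linarith)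
    nlinarith [norm_nonneg (T b - T a)]
  have hsub : (⋃ y ∈ S, (y +ᵥ V)) ⊆ Metric.ball (0 : (EuclideanSpace ℝ (Fin n))) (3 / 2 * R) := by
    intro z hz
    simp only [Set.mem_iUnion] at hz
    obtain ⟨y, hy, a, ha, rfl⟩ := hz
    simp only [V, Set.mem_preimage, mem_ball_zero_iff] at ha
    rw [mem_ball_zero_iff]
    calc ‖y + a‖ ≤ ‖y‖ + ‖a‖ := norm_add_le _ _
      _ < 3 / 2 * R := by nlinarith [hS y hy, hRT a]
  have hvol := measure_mono (μ := volume) hsub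
  rw [measure_biUnion_finset hdisj (fun y _ => hVmeas.const_vadd y)] at hvol
  simp only [measure_vadd, Finset.sum_const, nsmul_eq_mul] at hvol
  have hV : volume V = ENNReal.ofReal (∏ k, w k) *
      volume (Metric.ball (0 : EuclideanSpace ℝ (Fin n)) (1 / 2)) := by
    simp only [V]
    rw [Measure.addHaar_preimage_linearMap _ (by rw [hdet]; exact hdetpos.ne'), hdet]
    congr 2
    rw [Finset.prod_inv_distrib, inv_inv, abs_of_pos (Finset.prod_pos fun k _ => hw k)]
  rw [hV, Measure.addHaar_ball_of_pos volume (0 : EuclideanSpace ℝ (Fin n))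
      (by norm_num : (0 : ℝ) < 1 / 2),
    Measure.addHaar_ball_of_pos volume (0 : EuclideanSpace ℝ (Fin n))
      (by positivity : (0 : ℝ) < 3 / 2 * R)] at hvol
  have hb0 : volume (Metric.ball (0 : (EuclideanSpace ℝ (Fin n))) 1) ≠ 0 :=
    (Metric.measure_ball_pos _ _ one_pos).ne'
  have hb1 : volume (Metric.ball (0 : (EuclideanSpace ℝ (Fin n))) 1) ≠ ⊤ := measure_ball_lt_top.ne
  rw [← mul_assoc, ← mul_assoc, ENNReal.mul_le_mul_iff_left hb0 hb1,
    ← ENNReal.ofReal_natCast, ← ENNReal.ofReal_mul (by positivity),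
    ← ENNReal.ofReal_mul (mul_nonneg (by positivity) (Finset.prod_nonneg fun k _ => (hw k).le)),
    ENNReal.ofReal_le_ofReal_iff (by positivity)] at hvol
  simp only [finrank_euclideanSpace, Fintype.card_fin] at hvol
  have hw' : 0 < ∏ k, w k := Finset.prod_pos fun k _ => hw k
  rw [Finset.prod_div_distrib, Finset.prod_const, Finset.card_univ, Fintype.card_fin,
    ← mul_div_assoc, le_div_iff₀ hw', ← mul_pow]
  have h2 : (0 : ℝ) < (1 / 2) ^ n := by positivity
  refine le_of_mul_le_mul_right ?_ h2
  rw [← mul_pow]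
  calc _ = (S.card : ℝ) * (∏ k, w k) * (1 / 2) ^ n := by ring
    _ ≤ _ := hvol
    _ = _ := by ring

open Module Submodule in
/-- Successive minima of a subgroup of Euclidean space, phrased as a large proper progression. -/
theorem exists_progression_of_addSubgroup {n : ℕ} (L : AddSubgroup (EuclideanSpace ℝ (Fin n)))
    {R : ℝ} (hR : 0 < R) (S : Finset (EuclideanSpace ℝ (Fin n)))
    (hS : ∀ x, x ∈ S ↔ x ∈ L ∧ ‖x‖ ≤ R) :
    ∃ (f : Fin n → EuclideanSpace ℝ (Fin n)) (N : Fin n → ℕ),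
      (∀ j, f j ∈ L) ∧ (∀ j, N j * ‖f j‖ ≤ R / n) ∧
      (∀ c c' : Fin n → ℕ, c ≤ N → c' ≤ N → ∑ j, c j • f j = ∑ j, c' j • f j → c = c') ∧
      (S.card : ℝ) ≤ (3 * n) ^ n * ∏ j, ((N j : ℝ) + 1) := by
  classical
  have hg : ∀ U : Submodule ℝ (EuclideanSpace ℝ (Fin n)), ∃ y : (EuclideanSpace ℝ (Fin n)),
      ((∀ x ∈ S, x ∈ U) ∧ y = 0) ∨
      (y ∈ S ∧ y ∉ U ∧ ∀ x ∈ S, x ∉ U → ‖y‖ ≤ ‖x‖) := by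
    intro U
    by_cases h : ∀ x ∈ S, x ∈ U
    · exact ⟨0, Or.inl ⟨h, rfl⟩⟩
    · push Not at h
      obtain ⟨x, hx, hxU⟩ := h
      obtain ⟨y, hy, hmin⟩ := Finset.exists_min_image (S.filter (· ∉ U)) (fun x => ‖x‖)
        ⟨x, by simp [hx, hxU]⟩
      rw [Finset.mem_filter] at hy
      exact ⟨y, Or.inr ⟨hy.1, hy.2, fun x hx hxU => hmin x (by simp [hx, hxU])⟩⟩
  choose g hg using hg
  let U : ℕ → Submodule ℝ (EuclideanSpace ℝ (Fin n)) := fun k =>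
    Nat.rec ⊥ (fun _ V => V ⊔ span ℝ {g V}) k
  have hUs : ∀ k, U (k + 1) = U k ⊔ span ℝ {g (U k)} := fun k => rfl
  have hUmono : Monotone U := monotone_nat_of_le_succ fun k => by rw [hUs]; exact le_sup_left
  let f : Fin n → EuclideanSpace ℝ (Fin n) := fun j => g (U j)
  have hfU : ∀ i j : Fin n, i < j → f i ∈ U j := fun i j hij =>
    hUmono (Nat.succ_le_of_lt hij) (by
      rw [Nat.succ_eq_add_one, hUs]
      exact mem_sup_right (mem_span_singleton_self _))
  let e := InnerProductSpace.gramSchmidtOrthonormalBasis (𝕜 := ℝ) (E := EuclideanSpace ℝ (Fin n))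
    (by simp) f
  have heU : ∀ k : ℕ, ∀ j : Fin n, k ≤ j → ∀ x ∈ U k, e.repr x j = 0 := by
    intro k
    induction k with
    | zero => intro j _ x hx; rw [(mem_bot ℝ).1 hx]; simp
    | succ k ih =>
      intro j hj x hx
      rw [hUs, mem_sup] at hx
      obtain ⟨y, hy, z, hz, rfl⟩ := hx
      obtain ⟨a, rfl⟩ := mem_span_singleton.1 hz
      have h1 := ih j (by omega) y hy
      have h2 : e.repr (f ⟨k, by omega⟩) j = 0 :=
        InnerProductSpace.gramSchmidtOrthonormalBasis_inv_triangular' _ f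
          (show (⟨k, by omega⟩ : Fin n) < j from hj)
      have h3 : e.repr (g (U k)) j = 0 := h2
      simp [h1, h3]
  let w : Fin n → ℝ := fun j => if f j = 0 then R else ‖f j‖
  have hfS : ∀ j, f j ≠ 0 → f j ∈ S ∧ f j ∉ U j ∧ ∀ x ∈ S, x ∉ U j → ‖f j‖ ≤ ‖x‖ := fun j hj =>
    (hg (U j)).resolve_left fun h => hj h.2
  have hw : ∀ j, 0 < w j := by
    intro j
    by_cases h : f j = 0
    · simp [w, h, hR]
    · simp [w, h]
  have hwR : ∀ j, w j ≤ R := by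
    intro j; by_cases h : f j = 0
    · simp [w, h]
    · simpa [w, h] using ((hS _).1 (hfS j h).1).2
  have hkey : ∀ x ∈ L, x ≠ 0 → ∀ j : Fin n, e.repr x j = 0 ∨ w j ≤ ‖x‖ := by
    intro x hxL hx j
    by_cases hxR : ‖x‖ ≤ R
    · have hxS := (hS x).2 ⟨hxL, hxR⟩
      by_cases hxU : x ∈ U j
      · exact Or.inl (heU j j le_rfl x hxU)
      · right
        rcases hg (U j) with h | h
        · exact absurd (h.1 x hxS) hxU
        · have h0 : f j ≠ 0 := fun h0 => h.2.1 (by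
            change f j ∈ U j
            rw [h0]; exact zero_mem _)
          simpa [w, h0] using h.2.2 x hxS hxU
    · exact Or.inr ((hwR j).trans (not_le.1 hxR).le)
  have hsep : ∀ x ∈ S, ∀ y ∈ S, x ≠ y → 1 ≤ ∑ k, (e.repr (x - y) k / w k) ^ 2 := by
    intro x hx y hy hxy
    have hz : x - y ≠ 0 := sub_ne_zero.2 hxy
    have hzL : x - y ∈ L := L.sub_mem ((hS x).1 hx).1 ((hS y).1 hy).1
    have hk := hkey _ hzL hz
    set z := x - y
    have hz0 : 0 < ‖z‖ := norm_pos_iff.2 hz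
    calc (1 : ℝ) = ‖z‖ ^ 2 / ‖z‖ ^ 2 := by field_simp
      _ = ∑ k, (e.repr z k / ‖z‖) ^ 2 := by
        have h : ‖z‖ ^ 2 = ∑ k, (e.repr z k) ^ 2 := by
          rw [← e.repr.norm_map z, EuclideanSpace.norm_sq_eq]
          simp only [Real.norm_eq_abs, sq_abs]
        simp only [div_pow]
        rw [← Finset.sum_div, ← h]
      _ ≤ _ := by
        refine Finset.sum_le_sum fun k _ => ?_
        rcases hk k with h | h
        · simp [h]
        · rw [div_pow, div_pow]
          have := hw k
          gcongr
  have hcard := card_le_of_deformed_separated e w hR hw hwR S (fun x hx => ((hS x).1 hx).2) hsep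
  let N : Fin n → ℕ := fun j => if f j = 0 then 0 else ⌊R / n / ‖f j‖⌋₊
  refine ⟨f, N, fun j => ?_, fun j => ?_, ?_, ?_⟩
  · by_cases h : f j = 0
    · rw [h]; exact zero_mem _
    · exact ((hS _).1 (hfS j h).1).1
  · by_cases h : f j = 0
    · simp [N, h]; positivity
    · simp only [N, h, if_false]
      rw [← le_div_iff₀ (norm_pos_iff.2 h)]
      exact Nat.floor_le (by positivity)
  · intro c c' hc hc' hsum
    by_contra hne
    have hex : (Finset.univ.filter fun j => c j ≠ c' j).Nonempty := by
      obtain ⟨j, hj⟩ := Function.ne_iff.1 hne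
      exact ⟨j, by simp [hj]⟩
    obtain ⟨j, hj, hmax⟩ := Finset.exists_max_image _ (fun j : Fin n => j) hex
    have hjne : c j ≠ c' j := (Finset.mem_filter.1 hj).2
    have hf0 : f j ≠ 0 := by
      intro h0
      have h1 := hc j; have h2 := hc' j
      simp only [N, h0, if_true] at h1 h2
      omega
    have h0 : ∑ i, ((c i : ℝ) - c' i) • f i = 0 := by
      simp only [sub_smul, Finset.sum_sub_distrib, Nat.cast_smul_eq_nsmul, hsum, sub_self]
    rw [← Finset.add_sum_erase _ _ (Finset.mem_univ j)] at h0
    have h1 : ∑ i ∈ Finset.univ.erase j, ((c i : ℝ) - c' i) • f i ∈ U j := by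
      refine sum_mem fun i hi => ?_
      rcases lt_or_ge i j with hij | hij
      · exact smul_mem _ _ (hfU i j hij)
      · have : c i = c' i := by
          by_contra hci
          have := hmax i (by simp [hci])
          exact (Finset.ne_of_mem_erase hi) (le_antisymm this hij)
        simp [this]
    have h2 : ((c j : ℝ) - c' j) • f j ∈ U j := by
      rw [eq_neg_of_add_eq_zero_left h0]
      exact neg_mem h1
    have h3 : (c j : ℝ) - c' j ≠ 0 := sub_ne_zero.2 (by exact_mod_cast hjne)
    exact (hfS j hf0).2.1 ((smul_mem_iff _ h3).1 h2)
  · refine hcard.trans ?_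
    rw [mul_pow, mul_assoc]
    gcongr
    calc ∏ k, R / w k ≤ ∏ k : Fin n, (n * ((N k : ℝ) + 1)) := by
          refine Finset.prod_le_prod (fun k _ => div_nonneg hR.le (hw k).le) fun k _ => ?_
          have hn : 1 ≤ (n : ℝ) := by exact_mod_cast (Nat.one_le_iff_ne_zero.2 (by
            intro h; exact absurd k.2 (by omega)))
          by_cases h : f k = 0
          · simp [w, N, h, hR.ne', hn]
          · simp only [w, N, h, if_false]
            have h1 := (Nat.lt_floor_add_one (R / n / ‖f k‖)).le
            calc R / ‖f k‖ = n * (R / n / ‖f k‖) := by field_simp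
              _ ≤ _ := by gcongr
      _ = _ := by simp [Finset.prod_mul_distrib]

open Module in
/-- A finite-dimensional space of functions has a barycentric spanner of evaluation points. -/
theorem exists_spanning_evaluations {ι : Type*} [Fintype ι] (W : Submodule ℝ (ι → ℝ)) :
    ∃ s : Fin (finrank ℝ W) → ι, ∀ x ∈ W, ∀ i, |x i| ≤ ∑ j, |x (s j)| := by
  classical
  let ev : ι → Dual ℝ W := fun i => (LinearMap.proj i).comp W.subtype
  have hspan : Submodule.span ℝ (Set.range ev) = ⊤ := by
    have h : (Submodule.span ℝ (Set.range ev)).dualCoannihilator = ⊥ := by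
      rw [eq_bot_iff]
      intro x hx
      rw [Submodule.mem_dualCoannihilator] at hx
      have : x = 0 := by
        ext i
        exact hx (ev i) (Submodule.subset_span ⟨i, rfl⟩)
      simp [this]
    rw [← Subspace.dualCoannihilator_dualAnnihilator_eq (W := Submodule.span ℝ (Set.range ev)), h]
    simp
  obtain ⟨κ, a, ha, hspan', hli⟩ := exists_linearIndependent' ℝ ev
  let e₀ : Basis κ ℝ (Dual ℝ W) := Basis.mk hli (by rw [hspan', hspan])
  have : Fintype κ := Fintype.ofInjective a ha
  have hcard : Fintype.card κ = finrank ℝ W := by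
    rw [← Subspace.dual_finrank_eq (K := ℝ) (V := W), finrank_eq_card_basis e₀]
  obtain ⟨s, -, hs⟩ := Finset.exists_max_image (Finset.univ : Finset (κ → ι))
    (fun s => |e₀.det (ev ∘ s)|) ⟨a, Finset.mem_univ _⟩
  have hdet : e₀.det (ev ∘ s) ≠ 0 := by
    have h := hs a (Finset.mem_univ _)
    have h1 : ev ∘ a = e₀ := (Basis.coe_mk _ _).symm
    rw [h1, Basis.det_self, abs_one] at h
    intro h0
    rw [h0, abs_zero] at h
    linarith
  have hb := (Basis.is_basis_iff_det e₀ (v := ev ∘ s)).2 hdet.isUnit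
  have hcoef : ∀ i, ∃ c : κ → ℝ, ev i = ∑ j, c j • ev (s j) ∧ ∀ j, |c j| ≤ 1 := by
    intro i
    have hmem : ev i ∈ Submodule.span ℝ (Set.range (ev ∘ s)) := by rw [hb.2]; trivial
    obtain ⟨c, hc⟩ := (Submodule.mem_span_range_iff_exists_fun ℝ).1 hmem
    refine ⟨c, hc.symm, fun j => ?_⟩
    have h := hs (Function.update s j i) (Finset.mem_univ _)
    have hu : ev ∘ Function.update s j i = Function.update (ev ∘ s) j (∑ k, c k • (ev ∘ s) k) := by
      rw [Function.comp_update, hc]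
    rw [hu, AlternatingMap.map_update_sum, Finset.sum_eq_single j] at h
    · rw [AlternatingMap.map_update_smul, Function.update_eq_self, smul_eq_mul, abs_mul] at h
      have := abs_pos.2 hdet
      nlinarith
    · intro k _ hk
      rw [AlternatingMap.map_update_smul, AlternatingMap.map_update_self _ _ hk.symm, smul_zero]
    · simp
  let eqv : Fin (finrank ℝ W) ≃ κ := (finCongr hcard.symm).trans (Fintype.equivFin κ).symm
  refine ⟨s ∘ eqv, fun x hx i => ?_⟩
  obtain ⟨c, hc, hc1⟩ := hcoef i
  have hxi : x i = ∑ j, c j * x (s j) := by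
    have := DFunLike.congr_fun hc (⟨x, hx⟩ : W)
    simpa [ev, LinearMap.sum_apply] using this
  rw [hxi]
  calc |∑ j, c j * x (s j)| ≤ ∑ j, |c j * x (s j)| := Finset.abs_sum_le_sum_abs _ _
    _ ≤ ∑ j, |x (s j)| := Finset.sum_le_sum fun j _ => by
      rw [abs_mul]
      exact mul_le_of_le_one_left (abs_nonneg _) (hc1 j)
    _ = _ := (eqv.sum_comp fun j => |x (s j)|).symm

/-- A finite set `F` of a torsion-free group with `0 ∈ F` and `2F - F ⊆ F - F` is trivial. -/
theorem eq_zero_of_add_sub_subset {V : Type*} [AddCommGroup V] [Module ℝ V] [DecidableEq V]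
    {F : Finset V} (h0 : 0 ∈ F) (hF : F + F - F ⊆ F - F) {f : V} (hf : f ∈ F) : f = 0 := by
  by_contra hne
  have hk : ∀ k : ℕ, (k : ℝ) • f ∈ F - F := by
    intro k
    induction k with
    | zero => simpa using Finset.sub_mem_sub h0 h0
    | succ k ih =>
      obtain ⟨x, hx, y, hy, hxy⟩ := Finset.mem_sub.1 ih
      have := hF (Finset.sub_mem_sub (Finset.add_mem_add hf hx) hy)
      rw [add_sub_assoc, hxy] at this
      simpa [add_smul, add_comm] using this
  have hinj : Function.Injective fun k : ℕ => (k : ℝ) • f := fun k l hkl =>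
    Nat.cast_injective (smul_left_injective ℝ hne hkl)
  exact Set.infinite_range_of_injective hinj
    ((F - F).finite_toSet.subset (by rintro _ ⟨k, rfl⟩; exact hk k))

theorem eq_zero_of_exp_mul_I_eq_one {x : ℝ} (h : Complex.exp (x * Complex.I) = 1)
    (hx : |x| < 2 * Real.pi) : x = 0 := by
  obtain ⟨n, hn⟩ := Complex.exp_eq_one_iff.1 h
  have h1 : x = n * (2 * Real.pi) := by
    have h2 : (x : ℂ) * Complex.I = ((n * (2 * Real.pi) : ℝ) : ℂ) * Complex.I := by
      rw [hn]; push_cast; ring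
    exact_mod_cast mul_right_cancel₀ Complex.I_ne_zero h2
  have hn0 : n = 0 := by
    rw [h1, abs_mul, abs_of_pos Real.two_pi_pos] at hx
    have h3 : |(n : ℝ)| < 1 := by
      by_contra hcon
      push Not at hcon
      nlinarith [Real.two_pi_pos]
    rw [← Int.cast_abs] at h3
    exact Int.abs_lt_one_iff.1 (by exact_mod_cast h3)
  simp [h1, hn0]

theorem norm_toLp_le_sum_abs {n : ℕ} (x : Fin n → ℝ) :
    ‖(WithLp.toLp 2 x : EuclideanSpace ℝ (Fin n))‖ ≤ ∑ j, |x j| := by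
  refine le_of_sq_le_sq ?_ (Finset.sum_nonneg fun _ _ => abs_nonneg _)
  rw [EuclideanSpace.norm_sq_eq]
  exact Finset.sum_sq_le_sq_sum_of_nonneg fun _ _ => abs_nonneg _

theorem norm_one_sub_exp_mul_I_le (x : ℝ) : ‖1 - Complex.exp (x * Complex.I)‖ ≤ |x| := by
  rw [norm_sub_rev, mul_comm]
  exact Real.norm_exp_I_mul_ofReal_sub_one_le

section Lift

variable {G ι : Type*} [AddCommGroup G] [Finite G] (γ : ι → AddChar G ℂ)

/-- The vector of arguments of the values at `a` of a family of characters. -/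
noncomputable def argLift (a : G) : ι → ℝ := fun i => (γ i a).arg

theorem exp_argLift (a : G) (i : ι) : Complex.exp (argLift γ a i * Complex.I) = γ i a := by
  have h := Complex.norm_mul_exp_arg_mul_I (γ i a)
  rwa [AddChar.norm_apply, Complex.ofReal_one, one_mul] at h

theorem abs_argLift_le (a : G) (i : ι) : |argLift γ a i| ≤ Real.pi / 2 * ‖1 - γ i a‖ := by
  have h := Complex.angle_le_mul_norm_sub (x := 1) (y := γ i a) (by simp) (AddChar.norm_apply _ _)
  rwa [Complex.angle_one_left] at h
  rw [← norm_ne_zero_iff, AddChar.norm_apply]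
  exact one_ne_zero

/-- Small lifts through characters respect the additive relations between short sums. -/
theorem argLift_relation {A : Finset G} (hγ : ∀ i, ∀ a ∈ A, |argLift γ a i| < Real.pi / 4)
    {a₁ a₂ a₃ b₁ b₂ b₃ a₄ a₅ : G} (h₁ : a₁ ∈ A) (h₂ : a₂ ∈ A) (h₃ : a₃ ∈ A) (h₄ : b₁ ∈ A)
    (h₅ : b₂ ∈ A) (h₆ : b₃ ∈ A) (h₇ : a₄ ∈ A) (h₈ : a₅ ∈ A)
    (h : a₁ + a₂ - a₃ = b₁ + b₂ - b₃ + (a₄ - a₅)) :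
    argLift γ a₁ + argLift γ a₂ - argLift γ a₃ =
      argLift γ b₁ + argLift γ b₂ - argLift γ b₃ + (argLift γ a₄ - argLift γ a₅) := by
  funext i
  simp only [Pi.add_apply, Pi.sub_apply]
  rw [← sub_eq_zero]
  apply eq_zero_of_exp_mul_I_eq_one
  · have h' : a₁ + a₂ - a₃ - (b₁ + b₂ - b₃ + (a₄ - a₅)) = 0 := sub_eq_zero.2 h
    have h1 := congrArg (γ i) h'
    simp only [AddChar.map_sub_eq_div, AddChar.map_add_eq_mul, AddChar.map_zero_eq_one] at h1
    rw [← h1]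
    push_cast
    simp only [sub_mul, add_mul, Complex.exp_sub, Complex.exp_add, exp_argLift]
  · have := abs_lt.1 (hγ i _ h₁)
    have := abs_lt.1 (hγ i _ h₂)
    have := abs_lt.1 (hγ i _ h₃)
    have := abs_lt.1 (hγ i _ h₄)
    have := abs_lt.1 (hγ i _ h₅)
    have := abs_lt.1 (hγ i _ h₆)
    have := abs_lt.1 (hγ i _ h₇)
    have := abs_lt.1 (hγ i _ h₈)
    rw [abs_lt]
    constructor <;> linarith

open Module in
/-- If `2A - A` is covered by few translates of `A - A`, then the lifts of `A` lie in a space of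
small dimension. -/
theorem exists_submodule_argLift_mem [DecidableEq G] [Fintype ι] {A T : Finset G} (h0 : 0 ∈ A)
    (hTA : T ⊆ A + A - A) (hcov : A + A - A ⊆ T + (A - A))
    (hγ : ∀ i, ∀ a ∈ A, |argLift γ a i| < Real.pi / 4) :
    ∃ W : Submodule ℝ (ι → ℝ), finrank ℝ W ≤ T.card ∧ ∀ a ∈ A, argLift γ a ∈ W := by
  classical
  have hrep : ∀ t : G, ∃ b : G × G × G, t ∈ T →
      b.1 ∈ A ∧ b.2.1 ∈ A ∧ b.2.2 ∈ A ∧ b.1 + b.2.1 - b.2.2 = t := by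
    intro t
    by_cases ht : t ∈ T
    · obtain ⟨w, hw, z, hz, rfl⟩ := Finset.mem_sub.1 (hTA ht)
      obtain ⟨x, hx, y, hy, rfl⟩ := Finset.mem_add.1 hw
      exact ⟨⟨x, y, z⟩, fun _ => ⟨hx, hy, hz, rfl⟩⟩
    · exact ⟨0, fun h => absurd h ht⟩
  choose b hb using hrep
  let τ : G → ι → ℝ := fun t => argLift γ (b t).1 + argLift γ (b t).2.1 - argLift γ (b t).2.2
  let W : Submodule ℝ (ι → ℝ) := Submodule.span ℝ (T.image τ : Finset (ι → ℝ))
  refine ⟨W, (finrank_span_finset_le_card _).trans Finset.card_image_le, fun a ha => ?_⟩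
  let q : G → (ι → ℝ) ⧸ W := fun a => W.mkQ (argLift γ a)
  have hq0 : q 0 = 0 := by
    have : argLift γ (0 : G) = 0 := by
      funext i; simp [argLift]
    simp [q, this]
  have h := eq_zero_of_add_sub_subset (F := A.image q) (f := q a)
    (Finset.mem_image.2 ⟨0, h0, hq0⟩) ?_ (Finset.mem_image_of_mem _ ha)
  · exact (Submodule.Quotient.mk_eq_zero W).1 h
  · intro v hv
    obtain ⟨w, hw, z, hz, rfl⟩ := Finset.mem_sub.1 hv
    obtain ⟨x, hx, y, hy, rfl⟩ := Finset.mem_add.1 hw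
    obtain ⟨a₁, h₁, rfl⟩ := Finset.mem_image.1 hx
    obtain ⟨a₂, h₂, rfl⟩ := Finset.mem_image.1 hy
    obtain ⟨a₃, h₃, rfl⟩ := Finset.mem_image.1 hz
    obtain ⟨t, ht, r, hr, htr⟩ := Finset.mem_add.1
      (hcov (Finset.sub_mem_sub (Finset.add_mem_add h₁ h₂) h₃))
    obtain ⟨a₄, h₄, a₅, h₅, rfl⟩ := Finset.mem_sub.1 hr
    obtain ⟨hb₁, hb₂, hb₃, hbt⟩ := hb t ht
    have hrel := argLift_relation γ hγ h₁ h₂ h₃ hb₁ hb₂ hb₃ h₄ h₅ (by rw [hbt, htr])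
    have hτ : W.mkQ (τ t) = 0 := (Submodule.Quotient.mk_eq_zero W).2
      (Submodule.subset_span (by exact_mod_cast Finset.mem_image_of_mem τ ht))
    have hfin : q a₁ + q a₂ - q a₃ = q a₄ - q a₅ := by
      simp only [q]
      rw [← map_add, ← map_sub, hrel]
      change W.mkQ (τ t + _) = _
      rw [map_add, hτ, zero_add, map_sub]
    rw [hfin]
    exact Finset.sub_mem_sub (Finset.mem_image_of_mem _ h₄) (Finset.mem_image_of_mem _ h₅)

end Lift

open Module in
/-- Under a covering hypothesis, a Bohr set of large enough radius around a set `A` contains a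
proper coset progression of small rank that is large in terms of `A`. -/
theorem exists_coset_progression_in_bohr {G ι : Type*} [AddCommGroup G] [Finite G]
    [DecidableEq G] [Fintype ι] (γ : ι → AddChar G ℂ) {A T : Finset G} {m : ℕ} (hm : 1 ≤ m)
    (h0 : 0 ∈ A) (hTA : T ⊆ A + A - A) (hT : T.card ≤ m) (hcov : A + A - A ⊆ T + (A - A))
    (hγ : ∀ i, ∀ a ∈ A, ‖1 - γ i a‖ ≤ 4 / (13 * m ^ 2)) :
    ∃ (n : ℕ) (H : AddSubgroup G) (g : Fin n → G) (N : Fin n → ℕ), n ≤ m ∧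
      (∀ h ∈ H, ∀ c ≤ N, ∀ i, ‖1 - γ i (h + ∑ j, c j • g j)‖ ≤ 1 / 2) ∧
      (∀ h ∈ H, ∀ h' ∈ H, ∀ c ≤ N, ∀ c' ≤ N,
        h + ∑ j, c j • g j = h' + ∑ j, c' j • g j → h = h' ∧ c = c') ∧
      (A.card : ℝ) ≤ Nat.card H * ((3 * m) ^ m * ∏ j, ((N j : ℝ) + 1)) := by
  classical
  have hm' : (1 : ℝ) ≤ m := by exact_mod_cast hm
  have hsmall : ∀ i, ∀ a ∈ A, |argLift γ a i| ≤ 1 / (2 * m ^ 2) := by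
    intro i a ha
    refine (abs_argLift_le γ a i).trans ?_
    calc Real.pi / 2 * ‖1 - γ i a‖ ≤ 3.25 / 2 * (4 / (13 * m ^ 2)) := by
          gcongr
          · linarith [Real.pi_lt_d2]
          · exact hγ i a ha
      _ = _ := by field_simp; norm_num
  have hpi : ∀ i, ∀ a ∈ A, |argLift γ a i| < Real.pi / 4 := by
    intro i a ha
    refine (hsmall i a ha).trans_lt ?_
    have : 1 / (2 * (m : ℝ) ^ 2) ≤ 1 / 2 := by
      apply one_div_le_one_div_of_le <;> nlinarith
    linarith [Real.pi_gt_three]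
  obtain ⟨W, hWT, hAW⟩ := exists_submodule_argLift_mem γ h0 hTA hcov hpi
  obtain ⟨n, s, hnm, hs⟩ : ∃ (n : ℕ) (s : Fin n → ι), n ≤ m ∧
      ∀ x ∈ W, ∀ i, |x i| ≤ ∑ j, |x (s j)| := by
    obtain ⟨s, hs⟩ := exists_spanning_evaluations W
    exact ⟨_, s, hWT.trans hT, hs⟩
  have hnm' : (n : ℝ) ≤ m := by exact_mod_cast hnm
  let ψ : (ι → ℝ) →ₗ[ℝ] EuclideanSpace ℝ (Fin n) :=
    (WithLp.linearEquiv 2 ℝ (Fin n → ℝ)).symm.toLinearMap.comp (LinearMap.funLeft ℝ ℝ s)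
  have hψ : ∀ x j, ψ x j = x (s j) := fun x j => rfl
  have hψn : ∀ x ∈ W, ∀ i, |x i| ≤ m * ‖ψ x‖ := by
    intro x hx i
    calc |x i| ≤ ∑ j, |x (s j)| := hs x hx i
      _ ≤ ∑ j : Fin n, ‖ψ x‖ := Finset.sum_le_sum fun j _ => PiLp.norm_apply_le (ψ x) j
      _ = n * ‖ψ x‖ := by simp
      _ ≤ m * ‖ψ x‖ := by gcongr
  let Λ : AddSubgroup ((ι → ℝ) × G) :=
    { carrier := {p | p.1 ∈ W ∧ ∀ i, Complex.exp (p.1 i * Complex.I) = γ i p.2}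
      zero_mem' := ⟨zero_mem _, fun i => by simp⟩
      add_mem' := fun {p q} hp hq => ⟨add_mem hp.1 hq.1, fun i => by
        simp [add_mul, Complex.exp_add, hp.2 i, hq.2 i, AddChar.map_add_eq_mul]⟩
      neg_mem' := fun {p} hp => ⟨neg_mem hp.1, fun i => by
        simp [Complex.exp_neg, hp.2 i, AddChar.map_neg_eq_inv]⟩ }
  let L : AddSubgroup (EuclideanSpace ℝ (Fin n)) :=
    Λ.map (ψ.toAddMonoidHom.comp (AddMonoidHom.fst (ι → ℝ) G))
  have hL : ∀ v, v ∈ L ↔ ∃ p ∈ Λ, ψ p.1 = v := fun v => AddSubgroup.mem_map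
  have hR : (0 : ℝ) < 1 / (2 * m) := by positivity
  have hmR : (m : ℝ) * (1 / (2 * m)) = 1 / 2 := by field_simp
  have hfin : {x | x ∈ L ∧ ‖x‖ ≤ 1 / (2 * (m : ℝ))}.Finite := by
    refine (Set.finite_range fun g : G => ψ (argLift γ g)).subset ?_
    rintro _ ⟨hx, hxR⟩
    obtain ⟨p, hp, rfl⟩ := (hL _).1 hx
    refine ⟨p.2, ?_⟩
    have : argLift γ p.2 = p.1 := by
      funext i
      have h1 : |p.1 i| ≤ 1 / 2 := (hψn _ hp.1 i).trans (by rw [← hmR]; gcongr)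
      have h2 := abs_le.1 h1
      simp only [argLift]
      rw [← hp.2 i, Complex.arg_exp_mul_I, toIocMod_eq_self]
      constructor <;> linarith [Real.pi_gt_three]
    simp only [this]
  obtain ⟨f, N, hfL, hfN, hfinj, hcard⟩ := exists_progression_of_addSubgroup L hR hfin.toFinset
    (fun x => by simp)
  choose p hp hpf using fun j => (hL (f j)).1 (hfL j)
  let H : AddSubgroup G :=
    { carrier := {g | ∀ i, γ i g = 1}
      zero_mem' := fun i => by simp
      add_mem' := fun {a b} ha hb i => by simp [AddChar.map_add_eq_mul, ha i, hb i]
      neg_mem' := fun {a} ha i => by simp [AddChar.map_neg_eq_inv, ha i] }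
  have hΛc : ∀ c : Fin n → ℕ, ∑ j, c j • p j ∈ Λ := fun c =>
    sum_mem fun j _ => nsmul_mem (hp j) _
  have hψc : ∀ c : Fin n → ℕ, ψ (∑ j, c j • p j).1 = ∑ j, c j • f j := by
    intro c
    simp only [Prod.fst_sum, Prod.smul_fst, map_sum, map_nsmul, hpf]
  have hsnd : ∀ c : Fin n → ℕ, (∑ j, c j • p j).2 = ∑ j, c j • (p j).2 := by
    intro c
    simp only [Prod.snd_sum, Prod.smul_snd]
  have hbd : ∀ c ≤ N, ∀ i, |(∑ j, c j • p j).1 i| ≤ 1 / 2 := by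
    intro c hc i
    refine (hψn _ (hΛc c).1 i).trans ?_
    rw [hψc, ← hmR]
    gcongr
    calc ‖∑ j, c j • f j‖ ≤ ∑ j, ‖c j • f j‖ := norm_sum_le _ _
      _ ≤ ∑ j : Fin n, 1 / (2 * (m : ℝ)) / n := Finset.sum_le_sum fun j _ => by
          refine le_trans ?_ (hfN j)
          rw [← Nat.cast_smul_eq_nsmul ℝ, norm_smul, Real.norm_natCast]
          gcongr
          exact hc j
      _ = n * (1 / (2 * (m : ℝ)) / n) := by simp
      _ ≤ 1 / (2 * m) := by
          rcases Nat.eq_zero_or_pos n with h | h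
          · rw [h]; simp
          · have : (n : ℝ) ≠ 0 := by positivity
            exact (mul_div_cancel₀ _ this).le
  refine ⟨n, H, fun j => (p j).2, N, hnm, ?_, ?_, ?_⟩
  · intro h hh c hc i
    rw [AddChar.map_add_eq_mul, show γ i h = 1 from hh i, one_mul, ← hsnd, ← (hΛc c).2 i]
    exact (norm_one_sub_exp_mul_I_le _).trans (hbd c hc i)
  · intro h hh h' hh' c hc c' hc' heq
    have hx : (∑ j, c j • p j).1 = (∑ j, c' j • p j).1 := by
      funext i
      rw [← sub_eq_zero]
      apply eq_zero_of_exp_mul_I_eq_one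
      · have h1 := congrArg (γ i) heq
        rw [AddChar.map_add_eq_mul, AddChar.map_add_eq_mul, show γ i h = 1 from hh i,
          show γ i h' = 1 from hh' i, one_mul, one_mul, ← hsnd, ← hsnd, ← (hΛc c).2 i,
          ← (hΛc c').2 i] at h1
        push_cast
        rw [sub_mul, Complex.exp_sub, h1, div_self (Complex.exp_ne_zero _)]
      · have h1 := abs_le.1 (hbd c hc i)
        have h2 := abs_le.1 (hbd c' hc' i)
        rw [abs_lt]
        constructor <;> linarith [Real.pi_gt_three]
    have hcc : c = c' := hfinj c c' hc hc' (by rw [← hψc, ← hψc, hx])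
    refine ⟨?_, hcc⟩
    rw [hcc] at heq
    exact add_right_cancel heq
  · have hAL : ∀ a ∈ A, ψ (argLift γ a) ∈ hfin.toFinset := by
      intro a ha
      rw [Set.Finite.mem_toFinset]
      refine ⟨(hL _).2 ⟨(argLift γ a, a), ⟨hAW a ha, exp_argLift γ a⟩, rfl⟩, ?_⟩
      calc ‖ψ (argLift γ a)‖ ≤ ∑ j, |argLift γ a (s j)| := norm_toLp_le_sum_abs _
        _ ≤ ∑ j : Fin n, 1 / (2 * (m : ℝ) ^ 2) := Finset.sum_le_sum fun j _ => hsmall _ a ha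
        _ = n * (1 / (2 * (m : ℝ) ^ 2)) := by simp
        _ ≤ m * (1 / (2 * (m : ℝ) ^ 2)) := by gcongr
        _ = _ := by field_simp
    have hfib : A.card ≤ Nat.card H * hfin.toFinset.card := by
      refine Finset.card_le_mul_card_image_of_maps_to (f := fun a => ψ (argLift γ a))
        hAL _ fun v _ => ?_
      rcases (A.filter fun a => ψ (argLift γ a) = v).eq_empty_or_nonempty with he | ⟨a₀, ha₀⟩
      · rw [he]; simp
      · rw [Finset.mem_filter] at ha₀
        have hmem : ∀ a : {a // a ∈ A.filter fun a => ψ (argLift γ a) = v}, a.1 - a₀ ∈ H := by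
          rintro ⟨a, ha⟩ i
          rw [Finset.mem_filter] at ha
          have hz : |(argLift γ a - argLift γ a₀) i| ≤ m * ‖ψ (argLift γ a - argLift γ a₀)‖ :=
            hψn _ (sub_mem (hAW a ha.1) (hAW a₀ ha₀.1)) i
          rw [map_sub, ha.2, ha₀.2, sub_self, norm_zero, mul_zero] at hz
          have hz' : argLift γ a i = argLift γ a₀ i := sub_eq_zero.1 (abs_nonpos_iff.1 hz)
          rw [AddChar.map_sub_eq_div, ← exp_argLift γ a, ← exp_argLift γ a₀, hz',
            div_self (Complex.exp_ne_zero _)]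
        have hle := Nat.card_le_card_of_injective
          (fun a : {a // a ∈ A.filter fun a => ψ (argLift γ a) = v} => (⟨a.1 - a₀, hmem a⟩ : H))
          (fun a b hab => Subtype.ext (sub_left_injective (congrArg Subtype.val hab)))
        rwa [Nat.card_eq_fintype_card, Fintype.card_coe] at hle
    calc (A.card : ℝ) ≤ (Nat.card H : ℝ) * hfin.toFinset.card := by exact_mod_cast hfib
      _ ≤ _ := by
        gcongr
        refine hcard.trans ?_
        gcongr
        calc (3 * (n : ℝ)) ^ n ≤ (3 * m) ^ n := by gcongr
          _ ≤ (3 * m) ^ m := pow_le_pow_right₀ (by linarith) hnm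

theorem card_sq_le_card_mul_collisions {α G : Type*} [DecidableEq G] (P : Finset α)
    (σ : α → G) (E : Finset G) (hE : ∀ p ∈ P, σ p ∈ E) :
    P.card ^ 2 ≤ E.card * ((P ×ˢ P).filter fun pq => σ pq.1 = σ pq.2).card := by
  have h1 : ((P ×ˢ P).filter fun pq => σ pq.1 = σ pq.2).card =
      ∑ z ∈ E, (P.filter fun p => σ p = z).card ^ 2 := by
    rw [Finset.card_eq_sum_card_fiberwise (f := fun pq => σ pq.1) (t := E)]
    · refine Finset.sum_congr rfl fun z _ => ?_
      rw [sq, ← Finset.card_product]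
      congr 1
      ext pq
      simp only [Finset.mem_filter, Finset.mem_product]
      grind
    · intro pq hpq
      simp only [Finset.coe_filter, Finset.mem_product, Set.mem_ofPred_eq] at hpq
      exact hE _ hpq.1.1
  rw [h1, Finset.card_eq_sum_card_fiberwise (f := σ) (t := E) hE]
  exact sq_sum_le_card_mul_sum_sq

theorem sum_mem_nsmul {G : Type*} [AddCommGroup G] [DecidableEq G] {D : Finset G} {k : ℕ}
    (p : Fin k → G) (hp : ∀ i, p i ∈ D) : ∑ i, p i ∈ k • D := by
  induction k with
  | zero => simp
  | succ k ih =>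
    rw [Fin.sum_univ_castSucc, succ_nsmul]
    exact Finset.add_mem_add (ih _ fun i => hp _) (hp _)

section Fourier

variable {G : Type*} [AddCommGroup G] [Fintype G] [DecidableEq G]

/-- Parseval's identity for the characteristic function of a finite family `σ : P → G`. -/
theorem sum_norm_sq_mul_char {α : Type*} (P : Finset α) (σ : α → G) (y : G) :
    ∑ γ : AddChar G ℂ, ((‖∑ p ∈ P, γ (σ p)‖ ^ 2 : ℝ) : ℂ) * γ y =
      Fintype.card G * ((P ×ˢ P).filter fun pq => σ pq.1 + y = σ pq.2).card := by
  have h : ∀ γ : AddChar G ℂ, ((‖∑ p ∈ P, γ (σ p)‖ ^ 2 : ℝ) : ℂ) * γ y =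
      ∑ pq ∈ P ×ˢ P, γ (σ pq.1 + y - σ pq.2) := by
    intro γ
    rw [Complex.ofReal_pow, ← Complex.mul_conj', map_sum, Finset.sum_mul_sum,
      ← Finset.sum_product', Finset.sum_mul]
    refine Finset.sum_congr rfl fun pq _ => ?_
    rw [sub_eq_add_neg, AddChar.map_add_eq_mul, AddChar.map_add_eq_mul, AddChar.map_neg_eq_conj]
    ring
  simp only [h]
  rw [Finset.sum_comm]
  simp only [AddChar.sum_apply_eq_ite, sub_eq_zero]
  rw [Finset.card_filter, Nat.cast_sum, Finset.mul_sum]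
  refine Finset.sum_congr rfl fun pq _ => ?_
  split_ifs <;> simp

theorem sum_norm_sq_char {α : Type*} (P : Finset α) (σ : α → G) :
    ∑ γ : AddChar G ℂ, ‖∑ p ∈ P, γ (σ p)‖ ^ 2 =
      (Fintype.card G * ((P ×ˢ P).filter fun pq => σ pq.1 = σ pq.2).card : ℝ) := by
  have h := sum_norm_sq_mul_char P σ 0
  simp only [AddChar.map_zero_eq_one, mul_one, add_zero] at h
  exact_mod_cast h

/-- The characters with large Fourier coefficient at a set with small boundary are nearly
constant. -/
theorem norm_one_sub_char_le {D B : Finset G} {δ : ℝ} (hD : D.Nonempty) (h0 : 0 ∈ B)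
    (hDB : ((D + B).card : ℝ) ≤ (1 + δ) * D.card) {γ : AddChar G ℂ}
    (hγ : (D.card : ℝ) / 2 ≤ ‖∑ x ∈ D, γ x‖) {b : G} (hb : b ∈ B) :
    ‖1 - γ b‖ ≤ 4 * δ := by
  have hDpos : (0 : ℝ) < D.card := by exact_mod_cast hD.card_pos
  have hbound : ∀ E ⊆ D + B, E.card = D.card →
      ‖∑ x ∈ D + B, γ x - ∑ x ∈ E, γ x‖ ≤ δ * D.card := by
    intro E hE hEc
    rw [← Finset.sum_sdiff hE, add_sub_cancel_right]
    refine (norm_sum_le _ _).trans ?_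
    simp only [AddChar.norm_apply, Finset.sum_const, nsmul_eq_mul, mul_one]
    rw [Finset.card_sdiff_of_subset hE, Nat.cast_sub (Finset.card_le_card hE), hEc]
    linarith
  have h1 := hbound D (fun x hx => by simpa using Finset.add_mem_add hx h0) rfl
  have h2 := hbound (D.image (· + b))
    (Finset.image_subset_iff.2 fun x hx => Finset.add_mem_add hx hb)
    (Finset.card_image_of_injective _ (add_left_injective b))
  have h3 : ∑ x ∈ D.image (· + b), γ x = γ b * ∑ x ∈ D, γ x := by
    rw [Finset.sum_image fun _ _ _ _ h => add_left_injective b h, Finset.mul_sum]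
    exact Finset.sum_congr rfl fun x _ => by rw [AddChar.map_add_eq_mul, mul_comm]
  have h4 : ‖1 - γ b‖ * ‖∑ x ∈ D, γ x‖ ≤ 2 * δ * D.card := by
    rw [← norm_mul]
    calc ‖(1 - γ b) * ∑ x ∈ D, γ x‖
        = ‖(∑ x ∈ D + B, γ x - ∑ x ∈ D.image (· + b), γ x) -
            (∑ x ∈ D + B, γ x - ∑ x ∈ D, γ x)‖ := by
          rw [h3]; congr 1; ring
      _ ≤ _ := (norm_sub_le _ _).trans (by linarith)
  have h5 : ‖1 - γ b‖ * (D.card / 2) ≤ 2 * δ * D.card :=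
    (mul_le_mul_of_nonneg_left hγ (norm_nonneg _)).trans h4
  nlinarith

/-- A Bogolyubov-type lemma: the Bohr set of the large spectrum of `D` lies in `lD - lD`
when `lD` is not too large. -/
theorem mem_nsmul_sub_nsmul_of_char_near_one {D : Finset G} {l : ℕ} (hD : D.Nonempty)
    (hl : 3 * (((l + 1) • D).card : ℝ) < 4 ^ l * D.card) {y : G}
    (hy : ∀ γ : AddChar G ℂ, (D.card : ℝ) / 2 ≤ ‖∑ x ∈ D, γ x‖ → ‖1 - γ y‖ ≤ 1 / 2) :
    y ∈ (l + 1) • D - (l + 1) • D := by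
  by_contra hcon
  have hDpos : (0 : ℝ) < D.card := by exact_mod_cast hD.card_pos
  let P : Finset (Fin (l + 1) → G) := Fintype.piFinset fun _ => D
  let σ : (Fin (l + 1) → G) → G := fun p => ∑ i, p i
  have hPσ : ∀ p ∈ P, σ p ∈ (l + 1) • D := by
    intro p hp
    exact sum_mem_nsmul p (Fintype.mem_piFinset.1 hp)
  have hPcard : P.card = D.card ^ (l + 1) := by simp [P]
  let F : AddChar G ℂ → ℝ := fun γ => ‖∑ x ∈ D, γ x‖
  have hF : ∀ γ : AddChar G ℂ, ‖∑ p ∈ P, γ (σ p)‖ ^ 2 = F γ ^ (2 * l) * F γ ^ 2 := by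
    intro γ
    have h1 : ∑ p ∈ P, γ (σ p) = (∑ x ∈ D, γ x) ^ (l + 1) := by
      have h2 := (Finset.prod_univ_sum (fun _ : Fin (l + 1) => D) fun _ x => γ x).symm
      rw [Finset.prod_const, Finset.card_univ, Fintype.card_fin] at h2
      rw [← h2]
      refine Finset.sum_congr rfl fun p _ => ?_
      exact map_prod γ.toMonoidHom (fun i => Multiplicative.ofAdd (p i)) Finset.univ
    rw [h1, norm_pow]
    ring
  have hzero : ∑ γ : AddChar G ℂ, ‖∑ p ∈ P, γ (σ p)‖ ^ 2 * (γ y).re = 0 := by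
    have h1 := congrArg Complex.re (sum_norm_sq_mul_char P σ y)
    have h2 : ((P ×ˢ P).filter fun pq => σ pq.1 + y = σ pq.2) = ∅ := by
      rw [Finset.filter_eq_empty_iff]
      intro pq hpq h
      rw [Finset.mem_product] at hpq
      refine hcon ?_
      rw [eq_sub_of_add_eq' h]
      exact Finset.sub_mem_sub (hPσ _ hpq.2) (hPσ _ hpq.1)
    rw [h2, Complex.re_sum] at h1
    simpa only [Complex.re_ofReal_mul, Finset.card_empty, Nat.cast_zero, mul_zero,
      Complex.zero_re] using h1
  have hterm : ∀ γ : AddChar G ℂ, 1 / 2 * ‖∑ p ∈ P, γ (σ p)‖ ^ 2 -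
      3 / 2 * ((D.card / 2) ^ (2 * l) * F γ ^ 2) ≤ ‖∑ p ∈ P, γ (σ p)‖ ^ 2 * (γ y).re := by
    intro γ
    have hre : |(1 - γ y).re| ≤ ‖1 - γ y‖ := Complex.abs_re_le_norm _
    rw [Complex.sub_re, Complex.one_re] at hre
    have hre' := abs_le.1 hre
    by_cases hγ : (D.card : ℝ) / 2 ≤ F γ
    · have h1 := hy γ hγ
      have h2 : 1 / 2 ≤ (γ y).re := by linarith
      have h3 : (0 : ℝ) ≤ (D.card / 2) ^ (2 * l) * F γ ^ 2 := by positivity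
      nlinarith [sq_nonneg ‖∑ p ∈ P, γ (σ p)‖]
    · push Not at hγ
      have h1 : -1 ≤ (γ y).re := by
        have := abs_le.1 (Complex.abs_re_le_norm (γ y))
        rw [AddChar.norm_apply] at this
        exact this.1
      have h2 : ‖∑ p ∈ P, γ (σ p)‖ ^ 2 ≤ (D.card / 2) ^ (2 * l) * F γ ^ 2 := by
        rw [hF]
        have : 0 ≤ F γ := norm_nonneg _
        gcongr
      nlinarith [sq_nonneg ‖∑ p ∈ P, γ (σ p)‖]
  have hsum := Finset.sum_le_sum fun γ (_ : γ ∈ Finset.univ) => hterm γ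
  rw [hzero, Finset.sum_sub_distrib, ← Finset.mul_sum, ← Finset.mul_sum, ← Finset.mul_sum,
    sum_norm_sq_char P σ] at hsum
  have hF2 := sum_norm_sq_char D (id : G → G)
  have hdiag : ((D ×ˢ D).filter fun pq => id pq.1 = id pq.2).card = D.card := by
    rw [← Finset.diag_card D]
    congr 1
    ext pq
    simp only [Finset.mem_filter, Finset.mem_product, Finset.mem_diag, id]
    grind
  rw [hdiag] at hF2
  simp only [id] at hF2
  simp only [F, hF2] at hsum
  have hG : (0 : ℝ) < Fintype.card G := by exact_mod_cast Fintype.card_pos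
  set Q : ℕ := ((P ×ˢ P).filter fun pq => σ pq.1 = σ pq.2).card
  have hQ : (Q : ℝ) ≤ 3 * ((D.card / 2) ^ (2 * l) * D.card) := by
    have h1 : Fintype.card G * (Q : ℝ) ≤
        Fintype.card G * (3 * ((D.card / 2) ^ (2 * l) * D.card)) := by linarith
    exact le_of_mul_le_mul_left h1 hG
  have hCS : ((D.card : ℝ) ^ (l + 1)) ^ 2 ≤ ((l + 1) • D).card * Q := by
    have := card_sq_le_card_mul_collisions P σ _ hPσ
    rw [hPcard] at this
    exact_mod_cast this
  have hpow : (0 : ℝ) < D.card ^ (2 * l + 1) := by positivity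
  have hfin : (4 : ℝ) ^ l * D.card * D.card ^ (2 * l + 1) ≤
      3 * ((l + 1) • D).card * D.card ^ (2 * l + 1) := by
    have h4 : ((D.card : ℝ) / 2) ^ (2 * l) * 4 ^ l = D.card ^ (2 * l) := by
      rw [div_pow, pow_mul 2 2 l]; norm_num
    calc (4 : ℝ) ^ l * D.card * D.card ^ (2 * l + 1) = 4 ^ l * (D.card ^ (l + 1)) ^ 2 := by ring
      _ ≤ 4 ^ l * (((l + 1) • D).card * (3 * ((D.card / 2) ^ (2 * l) * D.card))) := by
          have := hCS.trans (mul_le_mul_of_nonneg_left hQ (Nat.cast_nonneg _))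
          gcongr
      _ = 3 * ((l + 1) • D).card * ((D.card / 2) ^ (2 * l) * 4 ^ l * D.card) := by ring
      _ = _ := by rw [h4]; ring
  linarith [le_of_mul_le_mul_right hfin hpow]

end Fourier

theorem exists_finiteIndex_notMem {G : Type*} [AddCommGroup G] [AddGroup.FG G] {x : G}
    (hx : x ≠ 0) : ∃ K : AddSubgroup G, K.FiniteIndex ∧ x ∉ K := by
  obtain ⟨n, ι, _, p, hp, e, ⟨f⟩⟩ := AddCommGroup.equiv_free_prod_directSum_zmod G
  suffices h : ∃ (Q : Type) (_ : AddCommGroup Q) (_ : Finite Q) (φ : G →+ Q), φ x ≠ 0 by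
    obtain ⟨Q, _, _, φ, hφ⟩ := h
    exact ⟨φ.ker, inferInstance, hφ⟩
  have hfx : f x ≠ 0 := fun h => hx (by simpa using h)
  by_cases h1 : (f x).1 = 0
  · have h2 : (f x).2 ≠ 0 := fun h2 => hfx (Prod.ext h1 h2)
    obtain ⟨i, hi⟩ : ∃ i, (f x).2 i ≠ 0 := by
      by_contra hcon
      push Not at hcon
      exact h2 (DFinsupp.ext hcon)
    have : NeZero (p i ^ e i) := ⟨pow_ne_zero _ (hp i).ne_zero⟩
    exact ⟨ZMod (p i ^ e i), inferInstance, inferInstance,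
      ((DFinsupp.evalAddMonoidHom i).comp (AddMonoidHom.snd _ _)).comp f.toAddMonoidHom, hi⟩
  · obtain ⟨i, hi⟩ := Finsupp.ne_iff.1 h1
    refine ⟨ZMod (((f x).1 i).natAbs + 1), inferInstance, inferInstance,
      ((Int.castAddHom _).comp ((Finsupp.applyAddHom i).comp (AddMonoidHom.fst _ _))).comp
        f.toAddMonoidHom, fun h => hi ?_⟩
    have h' : (((f x).1 i : ℤ) : ZMod (((f x).1 i).natAbs + 1)) = 0 := h
    rw [ZMod.intCast_zmod_eq_zero_iff_dvd] at h'
    have := Int.eq_zero_of_dvd_of_natAbs_lt_natAbs h' (by omega)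
    simpa using this

/-- A finite subset of a finitely generated abelian group embeds in a finite quotient. -/
theorem exists_finite_model {G : Type*} [AddCommGroup G] [AddGroup.FG G] (F : Finset G) :
    ∃ K : AddSubgroup G, Finite (G ⧸ K) ∧ ∀ x ∈ F, (x : G ⧸ K) = 0 → x = 0 := by
  classical
  choose! K hK hxK using fun (x : G) (hx : x ≠ 0) => exists_finiteIndex_notMem hx
  refine ⟨⨅ x : {x // x ∈ F.filter (· ≠ 0)}, K x, ?_, fun x hx h => ?_⟩
  · have : ∀ x : {x // x ∈ F.filter (· ≠ 0)}, (K x).FiniteIndex := fun x =>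
      hK x (Finset.mem_filter.1 x.2).2
    have : (⨅ x : {x // x ∈ F.filter (· ≠ 0)}, K x).FiniteIndex :=
      AddSubgroup.finiteIndex_iInf this
    exact AddSubgroup.finite_quotient_of_finiteIndex
  · by_contra hne
    rw [QuotientAddGroup.eq_zero_iff, AddSubgroup.mem_iInf] at h
    exact hxK x hne (h ⟨x, Finset.mem_filter.2 ⟨hx, hne⟩⟩)

theorem card_nsmul_sub_nsmul_le_of_doubling {G : Type*} [AddCommGroup G] [DecidableEq G]
    {A : Finset G} {K : ℝ} (hA : A.Nonempty) (hAK : ((A + A).card : ℝ) ≤ K * A.card) (m n : ℕ) :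
    ((m • A - n • A).card : ℝ) ≤ K ^ (m + n) * A.card := by
  have hpos : (0 : ℝ) < A.card := by exact_mod_cast hA.card_pos
  have h := Finset.pluennecke_ruzsa_inequality_nsmul_sub_nsmul_add hA A m n
  have h' : ((m • A - n • A).card : ℝ) ≤ ((A + A).card / A.card : ℝ) ^ (m + n) * A.card := by
    have h2 := (NNRat.cast_le (K := ℝ)).2 h
    push_cast at h2
    exact h2
  refine h'.trans ?_
  gcongr
  rwa [div_le_iff₀ hpos]

/-- Covering `2A - A` by translates of `A - A` bounds the growth of the multiples of `A - A`. -/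
theorem card_nsmul_sub_le_of_cover {G : Type*} [AddCommGroup G] [DecidableEq G]
    {A T : Finset G} (hcov : A + A - A ⊆ T + (A - A)) (k : ℕ) :
    ((k + 1) • (A - A)).card ≤ (2 * k + 1) ^ T.card * (A - A).card := by
  have hrep : ∀ x ∈ (k + 1) • (A - A), ∃ c : {t // t ∈ T} → ℤ, (∀ t, |c t| ≤ k) ∧
      ∃ b ∈ A - A, ∑ t, c t • (t : G) + b = x := by
    induction k with
    | zero => exact fun x hx => ⟨0, by simp, x, by simpa using hx, by simp⟩
    | succ k ih =>
      intro x hx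
      rw [succ_nsmul] at hx
      obtain ⟨y, hy, d, hd, rfl⟩ := Finset.mem_add.1 hx
      obtain ⟨a₁, ha₁, a₂, ha₂, rfl⟩ := Finset.mem_sub.1 hd
      obtain ⟨c, hc, b, hb, rfl⟩ := ih y hy
      obtain ⟨a₃, ha₃, a₄, ha₄, rfl⟩ := Finset.mem_sub.1 hb
      obtain ⟨t₁, ht₁, b₁, hb₁, h₁⟩ := Finset.mem_add.1
        (hcov (Finset.sub_mem_sub (Finset.add_mem_add ha₁ ha₃) ha₄))
      obtain ⟨a₅, ha₅, a₆, ha₆, rfl⟩ := Finset.mem_sub.1 hb₁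
      obtain ⟨t₂, ht₂, b₂, hb₂, h₂⟩ := Finset.mem_add.1
        (hcov (Finset.sub_mem_sub (Finset.add_mem_add ha₂ ha₆) ha₅))
      obtain ⟨a₇, ha₇, a₈, ha₈, rfl⟩ := Finset.mem_sub.1 hb₂
      refine ⟨c + Pi.single ⟨t₁, ht₁⟩ 1 - Pi.single ⟨t₂, ht₂⟩ 1, fun t => ?_, a₈ - a₇,
        Finset.sub_mem_sub ha₈ ha₇, ?_⟩
      · have h3 := abs_le.1 (hc t)
        simp only [Pi.add_apply, Pi.sub_apply, Pi.single_apply, Nat.cast_add, Nat.cast_one]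
        rw [abs_le]
        split_ifs <;> constructor <;> linarith
      · have h5 : ∀ t : {t // t ∈ T}, ∑ s, (Pi.single t 1 : {t // t ∈ T} → ℤ) s • (s : G) = t := by
          intro t
          rw [Finset.sum_eq_single t] <;> simp +contextual
        simp only [Pi.add_apply, Pi.sub_apply, sub_smul, add_smul, Finset.sum_sub_distrib,
          Finset.sum_add_distrib, h5]
        have h3 : a₁ = t₁ + (a₅ - a₆) + a₄ - a₃ := by rw [h₁]; abel
        have h4 : a₂ = t₂ + (a₇ - a₈) + a₅ - a₆ := by rw [h₂]; abel
        rw [h3, h4]; abel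
  let Q : Finset (({t // t ∈ T} → ℤ) × G) :=
    (Fintype.piFinset fun _ => Finset.Icc (-(k : ℤ)) k) ×ˢ (A - A)
  have hsub : (k + 1) • (A - A) ⊆ Q.image fun p => ∑ t : {t // t ∈ T}, p.1 t • (t : G) + p.2 := by
    intro x hx
    obtain ⟨c, hc, b, hb, h⟩ := hrep x hx
    refine Finset.mem_image.2 ⟨(c, b), Finset.mem_product.2 ⟨Fintype.mem_piFinset.2 fun t =>
      Finset.mem_Icc.2 (abs_le.1 (hc t)), hb⟩, h⟩
  refine (Finset.card_le_card hsub).trans (Finset.card_image_le.trans ?_)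
  rw [Finset.card_product, Fintype.card_piFinset]
  simp only [Finset.prod_const, Int.card_Icc, Finset.card_univ, Fintype.card_coe]
  gcongr
  omega

/-- Small doubling gives a covering of `2A - A` and polynomial growth of `A - A`. -/
theorem exists_cover_of_doubling {G : Type*} [AddCommGroup G] [DecidableEq G]
    {A : Finset G} {K : ℝ} (hA : A.Nonempty) (hK : 1 ≤ K)
    (hAK : ((A + A).card : ℝ) ≤ K * A.card) :
    ∃ T ⊆ A + A - A, T.card ≤ ⌊K ^ 4⌋₊ ∧ A + A - A ⊆ T + (A - A) ∧
      ∀ k : ℕ, 1 ≤ k → (k • (A - A)).card ≤ (6 * k) ^ ⌊K ^ 4⌋₊ * A.card := by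
  have h1 : ((A + A - A + A).card : ℝ) ≤ K ^ 4 * A.card := by
    have h := card_nsmul_sub_nsmul_le_of_doubling hA hAK 3 1
    rw [one_nsmul] at h
    convert h using 3
    rw [succ_nsmul, two_nsmul, sub_add_eq_add_sub]
  obtain ⟨T, hTA, hT, hcov⟩ := Finset.ruzsa_covering_add hA h1
  have hTm : T.card ≤ ⌊K ^ 4⌋₊ := Nat.le_floor hT
  refine ⟨T, hTA, hTm, hcov, fun k hk => ?_⟩
  obtain ⟨k, rfl⟩ := Nat.exists_eq_add_of_le' hk
  have h2 := card_nsmul_sub_le_of_cover hcov k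
  have h3 : ((A - A).card : ℝ) ≤ K ^ 2 * A.card := by
    simpa using card_nsmul_sub_nsmul_le_of_doubling hA hAK 1 1
  set m := ⌊K ^ 4⌋₊
  have h4 : K ^ 2 ≤ 2 ^ m := by
    have h5 : K ^ 4 < m + 1 := Nat.lt_floor_add_one _
    have h6 : (m : ℝ) + 1 ≤ 2 ^ m := by exact_mod_cast Nat.lt_two_pow_self
    have h7 : K ^ 2 ≤ K ^ 4 := pow_le_pow_right₀ hK (by norm_num)
    linarith
  have h8 : (((k + 1) • (A - A)).card : ℝ) ≤ (6 * ((k : ℝ) + 1)) ^ m * A.card := by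
    calc (((k + 1) • (A - A)).card : ℝ) ≤ (2 * k + 1) ^ T.card * (A - A).card := by
          exact_mod_cast h2
      _ ≤ (2 * k + 1) ^ m * (2 ^ m * A.card) := by
          gcongr
          · linarith [(Nat.cast_nonneg k : (0 : ℝ) ≤ k)]
          · exact h3.trans (by gcongr)
      _ = (2 * (2 * k + 1)) ^ m * A.card := by rw [mul_pow 2]; ring
      _ ≤ _ := by
          gcongr ?_ ^ m * _
          linarith [(Nat.cast_nonneg k : (0 : ℝ) ≤ k)]
  exact_mod_cast h8

/-- A sequence of polynomial growth has a step with small relative growth. -/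
theorem exists_small_growth {g : ℕ → ℕ} {a m q s : ℕ} (ha : 0 < a) (hq : 1 ≤ q) (h1 : a ≤ g 1)
    (hg : g (q * s + 1) ≤ (6 * (q * s + 1)) ^ m * a) (hs : (6 * (q * s + 1)) ^ m < 2 ^ s) :
    ∃ k, 1 ≤ k ∧ k ≤ q * s ∧ (g (k + 1) : ℝ) ≤ (1 + 1 / q) * g k := by
  by_contra hcon
  push Not at hcon
  have hq' : (0 : ℝ) < q := by exact_mod_cast hq
  have hgrow : ∀ k ≤ q * s, (1 + 1 / (q : ℝ)) ^ k * a ≤ g (k + 1) := by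
    intro k
    induction k with
    | zero => intro _; simpa using h1
    | succ k ih =>
      intro hk
      have h2 := hcon (k + 1) (by omega) hk
      have h3 := ih (by omega)
      calc (1 + 1 / (q : ℝ)) ^ (k + 1) * a = (1 + 1 / (q : ℝ)) * ((1 + 1 / (q : ℝ)) ^ k * a) := by
            ring
        _ ≤ (1 + 1 / (q : ℝ)) * g (k + 1) := by gcongr
        _ ≤ _ := h2.le
  have h2 : (2 : ℝ) ≤ (1 + 1 / (q : ℝ)) ^ q := by
    have h3 := one_add_mul_le_pow (a := 1 / (q : ℝ)) (by have := one_div_pos.2 hq'; linarith) q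
    have h4 : (q : ℝ) * (1 / q) = 1 := by field_simp
    linarith
  have h5 : (2 : ℝ) ^ s * a ≤ g (q * s + 1) :=
    calc (2 : ℝ) ^ s * a ≤ ((1 + 1 / (q : ℝ)) ^ q) ^ s * a := by gcongr
      _ = (1 + 1 / (q : ℝ)) ^ (q * s) * a := by rw [pow_mul]
      _ ≤ _ := hgrow _ le_rfl
  have h6 : 2 ^ s * a ≤ (6 * (q * s + 1)) ^ m * a := le_trans (by exact_mod_cast h5) hg
  exact absurd (Nat.le_of_mul_le_mul_right h6 ha) (not_le.2 hs)

theorem six_mul_pow_lt_two_pow {m : ℕ} (hm : 1 ≤ m) :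
    (6 * (13 * m ^ 2 * (20 * m ^ 2) + 1)) ^ m < 2 ^ (20 * m ^ 2) := by
  have h1 : m < 2 ^ m := Nat.lt_two_pow_self
  have h2 : 6 * (13 * m ^ 2 * (20 * m ^ 2) + 1) < 2 ^ (20 * m) := by
    calc 6 * (13 * m ^ 2 * (20 * m ^ 2) + 1) ≤ 1566 * m ^ 4 := by
          have : 1 ≤ m ^ 4 := Nat.one_le_pow _ _ hm
          nlinarith
      _ < 2 ^ 16 * m ^ 4 := by
          have : 1 ≤ m ^ 4 := Nat.one_le_pow _ _ hm
          omega
      _ ≤ (2 ^ m) ^ 16 * (2 ^ m) ^ 4 := by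
          gcongr
          exact Nat.le_self_pow (by omega) 2
      _ = 2 ^ (20 * m) := by rw [← pow_add, ← pow_mul, mul_comm]
  calc _ < (2 ^ (20 * m)) ^ m := Nat.pow_lt_pow_left h2 (by omega)
    _ = _ := by rw [← pow_mul]; ring_nf

theorem three_mul_pow_lt_four_pow {m k : ℕ} (hm : 1 ≤ m) (hk : k ≤ 260 * m ^ 4) :
    3 * (6 * ((20 * m ^ 2 + 1) * k)) ^ m < 4 ^ (20 * m ^ 2) := by
  have h1 : m < 2 ^ m := Nat.lt_two_pow_self
  have h2 : 3 * (6 * ((20 * m ^ 2 + 1) * k)) < 2 ^ (40 * m) := by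
    calc 3 * (6 * ((20 * m ^ 2 + 1) * k)) ≤ 3 * (6 * ((21 * m ^ 2) * (260 * m ^ 4))) := by
          have : 1 ≤ m ^ 2 := Nat.one_le_pow _ _ hm
          gcongr
          omega
      _ = 98280 * m ^ 6 := by ring
      _ < 2 ^ 34 * m ^ 6 := by
          have : 1 ≤ m ^ 6 := Nat.one_le_pow _ _ hm
          omega
      _ ≤ (2 ^ m) ^ 34 * (2 ^ m) ^ 6 := by
          gcongr
          exact Nat.le_self_pow (by omega) 2
      _ = 2 ^ (40 * m) := by rw [← pow_add, ← pow_mul, mul_comm]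
  calc 3 * (6 * ((20 * m ^ 2 + 1) * k)) ^ m ≤ 3 ^ m * (6 * ((20 * m ^ 2 + 1) * k)) ^ m := by
        gcongr
        exact Nat.le_self_pow (by omega) 3
    _ = (3 * (6 * ((20 * m ^ 2 + 1) * k))) ^ m := (mul_pow _ _ _).symm
    _ < (2 ^ (40 * m)) ^ m := Nat.pow_lt_pow_left h2 (by omega)
    _ = _ := by
      rw [show (4 : ℕ) = 2 ^ 2 from rfl, ← pow_mul, ← pow_mul]; ring_nf

/-- A set of polynomial growth in a finite group has a bounded multiple containing a large proper
coset progression. -/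
theorem exists_coset_progression_of_finite {G : Type*} [AddCommGroup G] [Fintype G]
    [DecidableEq G] {A T : Finset G} {m : ℕ} (hm : 1 ≤ m) (h0 : 0 ∈ A) (hTA : T ⊆ A + A - A)
    (hT : T.card ≤ m) (hcov : A + A - A ⊆ T + (A - A))
    (hgrow : ∀ k : ℕ, 1 ≤ k → (k • (A - A)).card ≤ (6 * k) ^ m * A.card) :
    ∃ (n : ℕ) (H : AddSubgroup G) (g : Fin n → G) (N : Fin n → ℕ), n ≤ m ∧
      (∀ h ∈ H, ∀ c ≤ N, h + ∑ j, c j • g j ∈ (10920 * m ^ 6) • (A - A)) ∧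
      (∀ h ∈ H, ∀ h' ∈ H, ∀ c ≤ N, ∀ c' ≤ N,
        h + ∑ j, c j • g j = h' + ∑ j, c' j • g j → h = h' ∧ c = c') ∧
      (A.card : ℝ) ≤ Nat.card H * ((3 * m) ^ m * ∏ j, ((N j : ℝ) + 1)) := by
  classical
  set B := A - A with hBdef
  have hAB : A ⊆ B := fun a ha => by simpa using Finset.sub_mem_sub ha h0
  have hB0 : 0 ∈ B := hAB h0
  have hBneg : -B = B := by rw [hBdef, neg_sub]
  have hApos : 0 < A.card := Finset.card_pos.2 ⟨0, h0⟩
  obtain ⟨k, hk1, hk, hkB⟩ := exists_small_growth (g := fun k => (k • B).card) (a := A.card)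
    (m := m) (q := 13 * m ^ 2) (s := 20 * m ^ 2) hApos (by nlinarith)
    (by simpa using Finset.card_le_card hAB) (hgrow _ (by omega)) (six_mul_pow_lt_two_pow hm)
  replace hk : k ≤ 260 * m ^ 4 := hk.trans (le_of_eq (by ring))
  set D := k • B with hD
  have hD0 : 0 ∈ D := by simpa using Finset.nsmul_mem_nsmul (n := k) hB0
  have hAD : A.card ≤ D.card := by
    refine Finset.card_le_card (hAB.trans ?_)
    simpa using Finset.nsmul_subset_nsmul_right (m := 1) hB0 hk1
  let ι := {γ : AddChar G ℂ // (D.card : ℝ) / 2 ≤ ‖∑ x ∈ D, γ x‖}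
  have : Fintype ι := Fintype.ofFinite ι
  have hkB' : ((D + B).card : ℝ) ≤ (1 + 1 / (13 * m ^ 2 : ℕ)) * D.card := by
    rw [hD, ← succ_nsmul]; exact hkB
  obtain ⟨n, H, g, N, hn, hbohr, hinj, hcard⟩ := exists_coset_progression_in_bohr
    (fun γ : ι => γ.1) hm h0 hTA hT hcov (fun γ a ha => by
      have := norm_one_sub_char_le ⟨0, hD0⟩ hB0 hkB' γ.2 (hAB ha)
      refine this.trans (le_of_eq ?_)
      push_cast
      ring)
  refine ⟨n, H, g, N, hn, fun h hh c hc => ?_, hinj, hcard⟩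
  have hlD : 3 * (((20 * m ^ 2 + 1) • D).card : ℝ) < 4 ^ (20 * m ^ 2) * D.card := by
    have h1 : 3 * ((20 * m ^ 2 + 1) • D).card < 4 ^ (20 * m ^ 2) * D.card := by
      have h2 := hgrow ((20 * m ^ 2 + 1) * k) (Nat.mul_pos (by omega) hk1)
      rw [hD, ← mul_nsmul']
      calc 3 * (((20 * m ^ 2 + 1) * k) • B).card
          ≤ 3 * ((6 * ((20 * m ^ 2 + 1) * k)) ^ m * A.card) := by gcongr
        _ = 3 * (6 * ((20 * m ^ 2 + 1) * k)) ^ m * A.card := by ring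
        _ < 4 ^ (20 * m ^ 2) * A.card :=
          Nat.mul_lt_mul_of_pos_right (three_mul_pow_lt_four_pow hm hk) hApos
        _ ≤ _ := by gcongr
    exact_mod_cast h1
  have hmem := mem_nsmul_sub_nsmul_of_char_near_one ⟨0, hD0⟩ hlD
    (y := h + ∑ j, c j • g j) fun γ hγ => hbohr h hh c hc ⟨γ, hγ⟩
  have hDneg : -((20 * m ^ 2 + 1) • D) = (20 * m ^ 2 + 1) • D := by
    rw [hD, ← neg_nsmul, ← neg_nsmul, hBneg]
  rw [sub_eq_add_neg, hDneg, hD, ← mul_nsmul', ← add_nsmul] at hmem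
  refine Finset.nsmul_subset_nsmul_right hB0 ?_ hmem
  calc (20 * m ^ 2 + 1) * k + (20 * m ^ 2 + 1) * k
      ≤ (21 * m ^ 2) * (260 * m ^ 4) + (21 * m ^ 2) * (260 * m ^ 4) := by
        have : 1 ≤ m ^ 2 := Nat.one_le_pow _ _ hm
        gcongr <;> omega
    _ = _ := by ring

/-- A set of polynomial growth in a finitely generated group has a bounded multiple containing a
large proper coset progression. -/
theorem exists_coset_progression_of_fg {G : Type*} [AddCommGroup G] [AddGroup.FG G]
    [DecidableEq G] {A T : Finset G} {m : ℕ} (hm : 1 ≤ m) (h0 : 0 ∈ A) (hTA : T ⊆ A + A - A)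
    (hT : T.card ≤ m) (hcov : A + A - A ⊆ T + (A - A))
    (hgrow : ∀ k : ℕ, 1 ≤ k → (k • (A - A)).card ≤ (6 * k) ^ m * A.card) :
    ∃ (n : ℕ) (H : AddSubgroup G) (g : Fin n → G) (N : Fin n → ℕ), n ≤ m ∧
      (∀ h ∈ H, ∀ c ≤ N, h + ∑ j, c j • g j ∈ (10920 * m ^ 6) • (A - A)) ∧
      (∀ h ∈ H, ∀ h' ∈ H, ∀ c ≤ N, ∀ c' ≤ N,
        h + ∑ j, c j • g j = h' + ∑ j, c' j • g j → h = h' ∧ c = c') ∧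
      (A.card : ℝ) ≤ Nat.card H * ((3 * m) ^ m * ∏ j, ((N j : ℝ) + 1)) := by
  classical
  set J := 10920 * m ^ 6 with hJ
  have hJ1 : 1 ≤ J := by
    have : 1 ≤ m ^ 6 := Nat.one_le_pow _ _ hm
    omega
  set B := A - A with hBdef
  have hAB : A ⊆ B := fun a ha => by simpa using Finset.sub_mem_sub ha h0
  have hB0 : 0 ∈ B := hAB h0
  have hBneg : -B = B := by rw [hBdef, neg_sub]
  have hneg : ∀ k : ℕ, ∀ x ∈ k • B, -x ∈ k • B := by
    intro k x hx
    rw [← hBneg, neg_nsmul]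
    exact Finset.neg_mem_neg hx
  have hJ0 : 0 ∈ J • B := by simpa using Finset.nsmul_mem_nsmul (n := J) hB0
  obtain ⟨Ker, hfin, hKer⟩ := exists_finite_model ((J + J + J) • B)
  have : Fintype (G ⧸ Ker) := Fintype.ofFinite _
  let φ : G →+ G ⧸ Ker := QuotientAddGroup.mk' Ker
  have hφ : ∀ x ∈ (J + J) • B, ∀ y ∈ J • B, φ x = φ y → x = y := by
    intro x hx y hy hxy
    rw [← sub_eq_zero]
    refine hKer _ ?_ (by
      change φ (x - y) = 0
      rw [map_sub, hxy, sub_self])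
    rw [add_nsmul, sub_eq_add_neg]
    exact Finset.add_mem_add hx (hneg _ _ hy)
  have hφ1 : ∀ x ∈ J • B, ∀ y ∈ J • B, φ x = φ y → x = y := fun x hx =>
    hφ x (Finset.nsmul_subset_nsmul_right hB0 (by omega) hx)
  have hAJ : A ⊆ J • B := by
    refine hAB.trans ?_
    simpa using Finset.nsmul_subset_nsmul_right (m := 1) hB0 hJ1
  have hφA : (A.image φ).card = A.card :=
    Finset.card_image_of_injOn fun x hx y hy h => hφ1 x (hAJ hx) y (hAJ hy) h
  have hsub : ∀ X Y : Finset G, (X - Y).image φ = X.image φ - Y.image φ := fun X Y =>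
    Finset.image_image₂_distrib (map_sub φ)
  have hφB : ∀ k : ℕ, k • (A.image φ - A.image φ) = (k • B).image φ := by
    intro k
    rw [← hsub, Finset.image_nsmul]
  obtain ⟨n, H', g', N, hn, hmem, hinj, hcard⟩ := exists_coset_progression_of_finite
    (A := A.image φ) (T := T.image φ) hm (Finset.mem_image.2 ⟨0, h0, map_zero φ⟩)
    (by rw [← Finset.image_add, ← hsub]; exact Finset.image_subset_image hTA)
    (Finset.card_image_le.trans hT)
    (by
      rw [← Finset.image_add, ← hsub, ← hsub, ← Finset.image_add]
      exact Finset.image_subset_image hcov)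
    (fun k hk => by
      rw [hφB, hφA]
      exact Finset.card_image_le.trans (hgrow k hk))
  rw [← hJ, hφB] at hmem
  have hH' : ∀ h ∈ H', ∃ x ∈ J • B, φ x = h := by
    intro h hh
    have := hmem h hh 0 (fun j => Nat.zero_le _)
    simpa using this
  let H : AddSubgroup G :=
    { carrier := {x | x ∈ J • B ∧ φ x ∈ H'}
      zero_mem' := ⟨hJ0, by rw [map_zero]; exact zero_mem _⟩
      add_mem' := by
        rintro x y ⟨hx, hx'⟩ ⟨hy, hy'⟩
        have hxy : φ (x + y) ∈ H' := by rw [map_add]; exact add_mem hx' hy'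
        obtain ⟨z, hz, hzx⟩ := hH' _ hxy
        have : x + y = z := hφ _ (by rw [add_nsmul]; exact Finset.add_mem_add hx hy) z hz hzx.symm
        exact ⟨this ▸ hz, hxy⟩
      neg_mem' := by
        rintro x ⟨hx, hx'⟩
        exact ⟨hneg _ _ hx, by rw [map_neg]; exact neg_mem hx'⟩ }
  have hg : ∀ j, ∃ v : G, v ∈ J • B ∧ (N j ≠ 0 → φ v = g' j) := by
    intro j
    by_cases hj : N j = 0
    · exact ⟨0, hJ0, fun h => absurd hj h⟩
    · have h1 := hmem 0 (zero_mem _) (Pi.single j 1) (by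
        intro i
        by_cases hij : i = j
        · subst hij; simp; omega
        · simp [hij])
      rw [zero_add, Finset.sum_eq_single j (fun i _ hij => by simp [hij]) (by simp)] at h1
      obtain ⟨v, hv, hvj⟩ := Finset.mem_image.1 h1
      exact ⟨v, hv, fun _ => by simpa using hvj⟩
  choose v hvJ hv using hg
  have hφc : ∀ c ≤ N, φ (∑ j, c j • v j) = ∑ j, c j • g' j := by
    intro c hc
    rw [map_sum]
    refine Finset.sum_congr rfl fun j _ => ?_
    rw [map_nsmul]
    by_cases hj : N j = 0
    · have : c j = 0 := Nat.le_zero.1 (hj ▸ hc j)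
      simp [this]
    · rw [hv j hj]
  have hPJ : ∀ h ∈ H, ∀ s : ℕ, ∀ c ≤ N, ∑ j, c j = s → h + ∑ j, c j • v j ∈ J • B := by
    intro h hh s
    induction s with
    | zero =>
      intro c hc hs
      have : ∀ j, c j = 0 := fun j => Finset.sum_eq_zero_iff.1 hs j (Finset.mem_univ j)
      simpa [this] using hh.1
    | succ s ih =>
      intro c hc hs
      obtain ⟨j, -, hj⟩ : ∃ j ∈ Finset.univ, c j ≠ 0 :=
        Finset.exists_ne_zero_of_sum_ne_zero (by omega)
      obtain ⟨c', rfl⟩ : ∃ c' : Fin n → ℕ, c = c' + Pi.single j 1 :=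
        ⟨c - Pi.single j 1, by
          funext i
          by_cases hij : i = j
          · subst hij; simp; omega
          · simp [hij]⟩
      have hc' : c' ≤ N := le_trans (fun i => by simp) hc
      have hsum : ∑ i, (c' + Pi.single j 1 : Fin n → ℕ) i • v i = ∑ i, c' i • v i + v j := by
        simp only [Pi.add_apply, add_smul, Finset.sum_add_distrib]
        congr 1
        rw [Finset.sum_eq_single j (fun i _ hij => by simp [hij]) (by simp)]
        simp
      have hs' : ∑ i, c' i = s := by
        simp only [Pi.add_apply, Finset.sum_add_distrib, Finset.sum_pi_single', Finset.mem_univ,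
          if_true] at hs
        omega
      have h1 := ih c' hc' hs'
      obtain ⟨z, hz, hzx⟩ := Finset.mem_image.1 (hmem (φ h) hh.2 _ hc)
      have h2 : h + ∑ i, (c' + Pi.single j 1 : Fin n → ℕ) i • v i = z := by
        refine hφ _ ?_ z hz ?_
        · rw [hsum, ← add_assoc, add_nsmul]
          exact Finset.add_mem_add h1 (hvJ j)
        · rw [map_add, hφc _ hc, hzx]
      rw [h2]
      exact hz
  refine ⟨n, H, v, N, hn, fun h hh c hc => hPJ h hh _ c hc rfl, ?_, ?_⟩
  · intro h hh h' hh' c hc c' hc' heq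
    have h1 := congrArg φ heq
    rw [map_add, map_add, hφc c hc, hφc c' hc'] at h1
    obtain ⟨h2, h3⟩ := hinj _ hh.2 _ hh'.2 c hc c' hc' h1
    exact ⟨hφ1 _ hh.1 _ hh'.1 h2, h3⟩
  · rw [hφA] at hcard
    refine hcard.trans ?_
    have hHfin : Finite H := ((J • B).finite_toSet.subset fun x hx => hx.1).to_subtype
    have hle : Nat.card H' ≤ Nat.card H :=
      Nat.card_le_card_of_surjective (fun x : H => (⟨φ x.1, x.2.2⟩ : H')) (by
        rintro ⟨h, hh⟩
        obtain ⟨x, hx, rfl⟩ := hH' h hh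
        exact ⟨⟨x, hx, hh⟩, rfl⟩)
    gcongr

/-- A set of polynomial growth has a bounded multiple containing a large proper coset
progression. -/
theorem exists_coset_progression {G : Type*} [AddCommGroup G]
    [DecidableEq G] {A T : Finset G} {m : ℕ} (hm : 1 ≤ m) (h0 : 0 ∈ A) (hTA : T ⊆ A + A - A)
    (hT : T.card ≤ m) (hcov : A + A - A ⊆ T + (A - A))
    (hgrow : ∀ k : ℕ, 1 ≤ k → (k • (A - A)).card ≤ (6 * k) ^ m * A.card) :
    ∃ (n : ℕ) (H : AddSubgroup G) (g : Fin n → G) (N : Fin n → ℕ), n ≤ m ∧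
      (∀ h ∈ H, ∀ c ≤ N, h + ∑ j, c j • g j ∈ (10920 * m ^ 6) • (A - A)) ∧
      (∀ h ∈ H, ∀ h' ∈ H, ∀ c ≤ N, ∀ c' ≤ N,
        h + ∑ j, c j • g j = h' + ∑ j, c' j • g j → h = h' ∧ c = c') ∧
      (A.card : ℝ) ≤ Nat.card H * ((3 * m) ^ m * ∏ j, ((N j : ℝ) + 1)) := by
  classical
  obtain ⟨Q, hfg, hAQ⟩ : ∃ Q : AddSubgroup G, AddGroup.FG Q ∧ ∀ x ∈ A, x ∈ Q :=
    ⟨AddSubgroup.closure (A : Set G), AddGroup.closure_finset_fg A,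
      fun x hx => AddSubgroup.subset_closure hx⟩
  let φ : Q →+ G := Q.subtype
  have hφ : Function.Injective φ := Q.subtype_injective
  have himg : ∀ X : Finset G, (∀ x ∈ X, x ∈ Q) → ∃ Y : Finset Q, Y.image φ = X := by
    intro X hX
    refine ⟨X.preimage φ hφ.injOn, ?_⟩
    rw [Finset.image_preimage]
    exact Finset.filter_true_of_mem fun x hx => ⟨⟨x, hX x hx⟩, rfl⟩
  obtain ⟨A, rfl⟩ := himg A hAQ
  obtain ⟨T, rfl⟩ := himg T (fun x hx => by
    obtain ⟨w, hw, z, hz, rfl⟩ := Finset.mem_sub.1 (hTA hx)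
    obtain ⟨x, hx', y, hy, rfl⟩ := Finset.mem_add.1 hw
    exact sub_mem (add_mem (hAQ x hx') (hAQ y hy)) (hAQ z hz))
  have hsub : ∀ X Y : Finset Q, (X - Y).image φ = X.image φ - Y.image φ := fun X Y =>
    Finset.image_image₂_distrib (map_sub φ)
  have hφB : ∀ k : ℕ, k • (A.image φ - A.image φ) = (k • (A - A)).image φ := by
    intro k
    rw [← hsub, Finset.image_nsmul]
  rw [← Finset.image_add, ← hsub, Finset.image_subset_image_iff hφ] at hTA
  rw [← Finset.image_add, ← hsub, ← hsub, ← Finset.image_add,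
    Finset.image_subset_image_iff hφ] at hcov
  simp only [hφB, Finset.card_image_of_injective _ hφ] at hT hgrow ⊢
  have h0' : (0 : Q) ∈ A := by
    obtain ⟨x, hx, hx0⟩ := Finset.mem_image.1 h0
    rwa [← hφ (hx0.trans (map_zero φ).symm)]
  obtain ⟨n, H, g, N, hn, hmem, hinj, hcard⟩ :=
    exists_coset_progression_of_fg hm h0' hTA hT hcov hgrow
  have hφc : ∀ (h : Q) (c : Fin n → ℕ), φ h + ∑ j, c j • φ (g j) = φ (h + ∑ j, c j • g j) := by
    intro h c
    simp only [map_add, map_sum, map_nsmul]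
  refine ⟨n, H.map φ, φ ∘ g, N, hn, ?_, ?_, ?_⟩
  · rintro _ ⟨h, hh, rfl⟩ c hc
    exact Finset.mem_image.2 ⟨_, hmem h hh c hc, (hφc h c).symm⟩
  · rintro _ ⟨h, hh, rfl⟩ _ ⟨h', hh', rfl⟩ c hc c' hc' heq
    have h1 : φ (h + ∑ j, c j • g j) = φ (h' + ∑ j, c' j • g j) := by
      rw [← hφc, ← hφc]; exact heq
    obtain ⟨h2, h3⟩ := hinj h hh h' hh' c hc c' hc' (hφ h1)
    exact ⟨by rw [h2], h3⟩
  · rw [Nat.card_congr (H.equivMapOfInjective φ hφ).toEquiv.symm]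
    exact hcard

/-- The coset progression with data `H, g, N` is proper and contained in `S`. -/
structure IsProperCosetProgression {G : Type*} [AddCommGroup G] {n : ℕ} (S : Finset G)
    (H : AddSubgroup G) (g : Fin n → G) (N : Fin n → ℕ) : Prop where
  mem : ∀ h ∈ H, ∀ c ≤ N, h + ∑ j, c j • g j ∈ S
  inj : ∀ h ∈ H, ∀ h' ∈ H, ∀ c ≤ N, ∀ c' ≤ N,
    h + ∑ j, c j • g j = h' + ∑ j, c' j • g j → h = h' ∧ c = c'

namespace IsProperCosetProgression

variable {G : Type*} [AddCommGroup G] {n : ℕ} {S : Finset G} {H : AddSubgroup G} {g : Fin n → G}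
  {N : Fin n → ℕ}

theorem finite (hP : IsProperCosetProgression S H g N) : (H : Set G).Finite :=
  S.finite_toSet.subset fun h hh => by
    simpa using hP.mem h hh 0 fun j => Nat.zero_le _

theorem card_le (hP : IsProperCosetProgression S H g N) :
    Nat.card H * ∏ j, (N j + 1) ≤ S.card := by
  classical
  have := hP.finite.to_subtype
  have h1 : Nat.card (H × ∀ j, Fin (N j + 1)) = Nat.card H * ∏ j, (N j + 1) := by
    rw [Nat.card_prod, Nat.card_pi]
    simp
  have hc : ∀ c : ∀ j, Fin (N j + 1), (fun j => (c j : ℕ)) ≤ N := fun c j =>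
    Nat.lt_succ_iff.1 (c j).2
  rw [← h1, ← Fintype.card_coe S, ← Nat.card_eq_fintype_card]
  refine Nat.card_le_card_of_injective
    (fun p : H × ∀ j, Fin (N j + 1) =>
      (⟨p.1 + ∑ j, (p.2 j : ℕ) • g j, hP.mem _ p.1.2 _ (hc p.2)⟩ : S)) fun p q hpq => ?_
  obtain ⟨h2, h3⟩ := hP.inj _ p.1.2 _ q.1.2 _ (hc p.2) _ (hc q.2) (congrArg Subtype.val hpq)
  exact Prod.ext (Subtype.ext h2) (funext fun j => Fin.ext (congrFun h3 j))

/-- A proper coset progression can be doubled by a translation that makes it disjoint from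
itself. -/
theorem cons [DecidableEq G] (hP : IsProperCosetProgression S H g N) {B : Finset G} (hB0 : 0 ∈ B)
    {a : G} (ha : a ∈ B)
    (hdisj : ∀ h ∈ H, ∀ h' ∈ H, ∀ c ≤ N, ∀ c' ≤ N,
      a + (h + ∑ j, c j • g j) ≠ h' + ∑ j, c' j • g j) :
    IsProperCosetProgression (S + B) H (Fin.cons a g : Fin (n + 1) → G) (Fin.cons 1 N) := by
  have hsum : ∀ c : Fin (n + 1) → ℕ, ∑ j, c j • (Fin.cons a g : Fin (n + 1) → G) j =
      c 0 • a + ∑ j, Fin.tail c j • g j := by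
    intro c
    simp [Fin.sum_univ_succ, Fin.tail]
  have htail : ∀ c : Fin (n + 1) → ℕ, c ≤ (Fin.cons 1 N : Fin (n + 1) → ℕ) → Fin.tail c ≤ N :=
    fun c hc j => by simpa [Fin.tail] using hc j.succ
  have hhead : ∀ c : Fin (n + 1) → ℕ, c ≤ (Fin.cons 1 N : Fin (n + 1) → ℕ) → c 0 = 0 ∨ c 0 = 1 := by
    intro c hc
    have := hc 0
    simp only [Fin.cons_zero] at this
    omega
  constructor
  · intro h hh c hc
    rw [hsum, add_left_comm, add_comm (c 0 • a)]
    refine Finset.add_mem_add (hP.mem h hh _ (htail c hc)) ?_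
    rcases hhead c hc with h0 | h0 <;> simpa [h0]
  · intro h hh h' hh' c hc c' hc' heq
    rw [hsum, hsum] at heq
    have hfin : c 0 = c' 0 →
        h + ∑ j, Fin.tail c j • g j = h' + ∑ j, Fin.tail c' j • g j → h = h' ∧ c = c' := by
      intro h1 h2
      obtain ⟨h3, h4⟩ := hP.inj h hh h' hh' _ (htail c hc) _ (htail c' hc') h2
      refine ⟨h3, ?_⟩
      rw [← Fin.cons_self_tail c, ← Fin.cons_self_tail c', h1, h4]
    rcases hhead c hc with h0 | h0 <;> rcases hhead c' hc' with h0' | h0' <;>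
      simp only [h0, h0', zero_smul, one_smul, zero_add] at heq
    · exact hfin (by rw [h0, h0']) heq
    · rw [add_left_comm] at heq
      exact absurd heq.symm (hdisj _ hh' _ hh _ (htail c' hc') _ (htail c hc))
    · rw [add_left_comm] at heq
      exact absurd heq (hdisj _ hh _ hh' _ (htail c hc) _ (htail c' hc'))
    · refine hfin (by rw [h0, h0']) ?_
      rw [add_left_comm h, add_left_comm h'] at heq
      exact add_left_cancel heq

/-- A proper coset progression in `J • B` extends until its difference set contains `A`, unless it
doubles many times. -/
theorem exists_extension [DecidableEq G] {A B : Finset G} {J : ℕ} (hB0 : 0 ∈ B) (hAB : A ⊆ B)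
    (hP : IsProperCosetProgression (J • B) H g N) (I : ℕ) :
    ∃ (i : ℕ) (g' : Fin (n + i) → G) (N' : Fin (n + i) → ℕ), i ≤ I ∧
      IsProperCosetProgression ((J + i) • B) H g' N' ∧
      ∏ j, (N' j + 1) = 2 ^ i * ∏ j, (N j + 1) ∧
      ((∀ a ∈ A, ∃ h ∈ H, ∃ h' ∈ H, ∃ c ≤ N', ∃ c' ≤ N',
        a + (h + ∑ j, c j • g' j) = h' + ∑ j, c' j • g' j) ∨ i = I) := by
  induction I with
  | zero => exact ⟨0, g, N, le_rfl, hP, by simp, Or.inr rfl⟩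
  | succ I ih =>
    obtain ⟨i, g', N', hi, hP', hprod, hor⟩ := ih
    by_cases hA : ∀ a ∈ A, ∃ h ∈ H, ∃ h' ∈ H, ∃ c ≤ N', ∃ c' ≤ N',
        a + (h + ∑ j, c j • g' j) = h' + ∑ j, c' j • g' j
    · exact ⟨i, g', N', by omega, hP', hprod, Or.inl hA⟩
    · obtain rfl := hor.resolve_left hA
      push Not at hA
      obtain ⟨a, ha, hdisj⟩ := hA
      refine ⟨i + 1, Fin.cons a g', Fin.cons 1 N', le_rfl, ?_, ?_, Or.inr rfl⟩
      · have h := hP'.cons hB0 (hAB ha) hdisj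
        rw [← succ_nsmul] at h
        exact h
      · change ∏ j : Fin (n + i + 1), _ = _
        rw [Fin.prod_univ_succ]
        simp only [Fin.cons_zero, Fin.cons_succ]
        rw [hprod]
        ring

end IsProperCosetProgression

theorem ncard_coset_progression_le {G : Type*} [AddCommGroup G] {d : ℕ} {H : AddSubgroup G}
    (hH : (H : Set G).Finite) (b s : Fin d → G) (len : Fin d → ℕ) :
    ((H : Set G) + ∑ i : Fin d, {y : G | ∃ j : ℕ, j < len i ∧ y = b i + j • s i}).ncard ≤
      Nat.card H * ∏ i, len i := by
  have := hH.to_subtype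
  have h1 : Nat.card (H × ∀ i, Fin (len i)) = Nat.card H * ∏ i, len i := by
    rw [Nat.card_prod, Nat.card_pi]
    simp
  rw [← h1]
  let f : (H × ∀ i, Fin (len i)) → G := fun p => p.1 + ∑ i, (b i + (p.2 i : ℕ) • s i)
  refine le_trans (Set.ncard_le_ncard (t := Set.range f) ?_ (Set.finite_range f)) ?_
  · rintro _ ⟨h, hh, x, hx, rfl⟩
    obtain ⟨y, hy, rfl⟩ := Set.mem_fintype_sum _ _ |>.1 hx
    choose j hj hyj using hy
    exact ⟨(⟨h, hh⟩, fun i => ⟨j i, hj i⟩), by simp [f, hyj]⟩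
  · exact Finite.card_range_le f

theorem pow_growth_lt_two_pow {m L : ℕ} (hm : 1 ≤ m) (hL : m < 2 ^ L) :
    (18 * m * (10920 * m ^ 6 + 40 * m * L)) ^ m < 2 ^ (40 * m * L) := by
  have hL1 : 1 ≤ L := by
    by_contra h
    obtain rfl : L = 0 := by omega
    simp at hL
    omega
  have h1 : 18 * m * (10920 * m ^ 6 + 40 * m * L) ≤ 18 * 10960 * (2 ^ L) ^ 7 := by
    have h2 : m * L ≤ (2 ^ L) ^ 6 := by
      calc m * L ≤ 2 ^ L * 2 ^ L := Nat.mul_le_mul hL.le Nat.lt_two_pow_self.le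
        _ = (2 ^ L) ^ 2 := by ring
        _ ≤ _ := Nat.pow_le_pow_right (Nat.two_pow_pos L) (by norm_num)
    have h3 : m ^ 6 ≤ (2 ^ L) ^ 6 := Nat.pow_le_pow_left hL.le 6
    calc 18 * m * (10920 * m ^ 6 + 40 * m * L)
        ≤ 18 * 2 ^ L * (10960 * (2 ^ L) ^ 6) :=
          Nat.mul_le_mul (Nat.mul_le_mul_left _ hL.le) (by nlinarith)
      _ = _ := by ring
  have h4 : 18 * 10960 * (2 ^ L) ^ 7 < 2 ^ (40 * L) := by
    have h5 : 18 * 10960 < (2 ^ L) ^ 33 := by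
      calc 18 * 10960 < (2 ^ 1) ^ 33 := by norm_num
        _ ≤ (2 ^ L) ^ 33 := Nat.pow_le_pow_left (Nat.pow_le_pow_right (by norm_num) hL1) _
    calc 18 * 10960 * (2 ^ L) ^ 7 < (2 ^ L) ^ 33 * (2 ^ L) ^ 7 :=
          Nat.mul_lt_mul_of_pos_right h5 (by positivity)
      _ = 2 ^ (40 * L) := by rw [← pow_add, ← pow_mul, mul_comm]
  calc _ < (2 ^ (40 * L)) ^ m := Nat.pow_lt_pow_left (h1.trans_lt h4) (by omega)
    _ = _ := by rw [← pow_mul]; ring_nf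

/-- A set of polynomial growth lies in a coset progression of controlled rank and size. -/
theorem exists_subset_coset_progression {G : Type*} [AddCommGroup G] [DecidableEq G]
    {A T : Finset G} {m L : ℕ} (hm : 1 ≤ m) (hL : m < 2 ^ L) (h0 : 0 ∈ A) (hTA : T ⊆ A + A - A)
    (hT : T.card ≤ m) (hcov : A + A - A ⊆ T + (A - A))
    (hgrow : ∀ k : ℕ, 1 ≤ k → (k • (A - A)).card ≤ (6 * k) ^ m * A.card) :
    ∃ (d : ℕ) (H : AddSubgroup G) (b s : Fin d → G) (len : Fin d → ℕ), (H : Set G).Finite ∧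
      d ≤ m + 40 * m * L ∧
      (A : Set G) ⊆ (H : Set G) + ∑ i : Fin d, {y : G | ∃ j : ℕ, j < len i ∧ y = b i + j • s i} ∧
      Nat.card H * ∏ i, len i ≤ 2 ^ (m + 80 * m * L) * A.card := by
  obtain ⟨n, H, g, N, hn, hmem, hinj, hcard⟩ := exists_coset_progression hm h0 hTA hT hcov hgrow
  have hP : IsProperCosetProgression ((10920 * m ^ 6) • (A - A)) H g N := ⟨hmem, hinj⟩
  have hB0 : (0 : G) ∈ A - A := Finset.mem_sub.2 ⟨0, h0, 0, h0, sub_zero 0⟩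
  have hAB : A ⊆ A - A := fun a ha => Finset.mem_sub.2 ⟨a, ha, 0, h0, sub_zero a⟩
  have hnum := pow_growth_lt_two_pow hm hL
  set I := 40 * m * L with hI
  set J := 10920 * m ^ 6 with hJ
  have hJ1 : 1 ≤ J := by
    have : 1 ≤ m ^ 6 := Nat.one_le_pow _ _ hm
    omega
  have hA0 : 0 < A.card := Finset.card_pos.2 ⟨0, h0⟩
  obtain ⟨i, g', N', hi, hP', hprod, hor⟩ := hP.exists_extension hB0 hAB I
  have hsize : Nat.card H * ∏ j, (N' j + 1) ≤ (6 * (J + i)) ^ m * A.card :=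
    hP'.card_le.trans (hgrow (J + i) (by omega))
  have hcard' : A.card ≤ Nat.card H * ((3 * m) ^ m * ∏ j, (N j + 1)) := by exact_mod_cast hcard
  have hsat := hor.resolve_right fun hiI => by
    rw [hprod, hiI] at hsize
    have h1 : 2 ^ I * (Nat.card H * ∏ j, (N j + 1)) ≤
        (18 * m * (J + I)) ^ m * (Nat.card H * ∏ j, (N j + 1)) :=
      calc 2 ^ I * (Nat.card H * ∏ j, (N j + 1))
          = Nat.card H * (2 ^ I * ∏ j, (N j + 1)) := by ring
        _ ≤ (6 * (J + I)) ^ m * A.card := hsize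
        _ ≤ (6 * (J + I)) ^ m * (Nat.card H * ((3 * m) ^ m * ∏ j, (N j + 1))) :=
          Nat.mul_le_mul_left _ hcard'
        _ = ((6 * (J + I)) * (3 * m)) ^ m * (Nat.card H * ∏ j, (N j + 1)) := by
          rw [mul_pow (6 * (J + I))]; ring
        _ = _ := by congr 2; ring
    have hpos : 0 < Nat.card H * ∏ j, (N j + 1) := by
      have := hP.finite.to_subtype
      exact Nat.mul_pos Nat.card_pos (Finset.prod_pos fun j _ => Nat.succ_pos _)
    exact absurd (Nat.le_of_mul_le_mul_right h1 hpos) (not_le.2 hnum)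
  refine ⟨n + i, H, fun j => -(N' j • g' j), g', fun j => 2 * N' j + 1, hP.finite,
    by omega, fun a ha => ?_, ?_⟩
  · obtain ⟨h, hh, h', hh', c, hc, c', hc', heq⟩ := hsat a ha
    refine ⟨h' - h, sub_mem hh' hh, ∑ j, (-(N' j • g' j) + (N' j + c' j - c j) • g' j), ?_, ?_⟩
    · refine (Set.mem_fintype_sum _ _).2 ⟨_, fun j => ⟨N' j + c' j - c j, ?_, rfl⟩, rfl⟩
      have : c' j ≤ N' j := hc' j
      change N' j + c' j - c j < 2 * N' j + 1
      omega
    · have h1 : ∀ j, -(N' j • g' j) + (N' j + c' j - c j) • g' j = c' j • g' j - c j • g' j := by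
        intro j
        have h2 : (N' j + c' j - c j) + c j = N' j + c' j := by
          have : c j ≤ N' j := hc j
          omega
        have h3 : (N' j + c' j - c j) • g' j + c j • g' j = N' j • g' j + c' j • g' j := by
          rw [← add_nsmul, h2, add_nsmul]
        rw [eq_sub_of_add_eq h3]
        abel
      simp only [h1, Finset.sum_sub_distrib]
      rw [← sub_eq_zero] at heq ⊢
      rw [← neg_eq_zero, ← heq]
      abel
  · have h6 : (6 * (J + i)) ^ m ≤ 2 ^ I := by
      refine le_trans (Nat.pow_le_pow_left ?_ m) hnum.le
      calc 6 * (J + i) ≤ 6 * (J + I) := by omega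
        _ ≤ 18 * m * (J + I) := Nat.mul_le_mul_right _ (by omega)
    calc Nat.card H * ∏ j, (2 * N' j + 1)
        ≤ Nat.card H * ∏ j, (2 * (N' j + 1)) :=
          Nat.mul_le_mul_left _ (Finset.prod_le_prod' fun j _ => by omega)
      _ = 2 ^ (n + i) * (Nat.card H * ∏ j, (N' j + 1)) := by
          rw [Finset.prod_mul_distrib, Finset.prod_const, Finset.card_univ, Fintype.card_fin]
          ring
      _ ≤ 2 ^ (m + I) * (2 ^ I * A.card) :=
          Nat.mul_le_mul (Nat.pow_le_pow_right (by norm_num) (by omega))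
            (hsize.trans (Nat.mul_le_mul_right _ h6))
      _ = 2 ^ (m + 80 * m * L) * A.card := by
          rw [← mul_assoc, ← pow_add]
          congr 2
          rw [hI]
          ring

theorem floor_pow_mul_log_le {ε K : ℝ} (hε : 0 < ε) (hK : 1 ≤ K) :
    (2 * ⌊K ^ 4⌋₊ + 80 * ⌊K ^ 4⌋₊ * (Nat.log 2 ⌊K ^ 4⌋₊ + 1) : ℝ) ≤
      (82 + 640 / ε) * K ^ (4 + ε) := by
  have hK0 : 0 < K := by linarith
  set m := ⌊K ^ 4⌋₊ with hm
  have hmK : (m : ℝ) ≤ K ^ 4 := Nat.floor_le (by positivity)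
  have hm1 : 1 ≤ m := Nat.le_floor (by simpa using one_le_pow₀ hK)
  have hm0 : (0 : ℝ) < m := by exact_mod_cast hm1
  have hlog : (Nat.log 2 m : ℝ) ≤ 8 * (K ^ ε / ε) := by
    have h1 : ((2 : ℝ) ^ Nat.log 2 m) ≤ m := by exact_mod_cast Nat.pow_log_le_self 2 (by omega)
    have h2 : Nat.log 2 m * Real.log 2 ≤ 4 * Real.log K := by
      have := Real.log_le_log (by positivity) (h1.trans hmK)
      rw [Real.log_pow, Real.log_pow] at this
      exact_mod_cast this
    have h3 : (1 / 2 : ℝ) ≤ Real.log 2 := by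
      have := Real.log_two_gt_d9
      linarith
    have h4 : Real.log K ≤ K ^ ε / ε := Real.log_le_rpow_div hK0.le hε
    have h5 : (Nat.log 2 m : ℝ) * (1 / 2) ≤ Nat.log 2 m * Real.log 2 :=
      mul_le_mul_of_nonneg_left h3 (Nat.cast_nonneg _)
    linarith
  have h1 : 1 ≤ K ^ ε := Real.one_le_rpow hK hε.le
  have h6 : K ^ (4 + ε) = K ^ 4 * K ^ ε := by
    rw [Real.rpow_add hK0]
    norm_cast
  calc (2 * m + 80 * m * (Nat.log 2 m + 1) : ℝ) = m * (82 + 80 * Nat.log 2 m) := by ring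
    _ ≤ K ^ 4 * (82 * K ^ ε + 80 * (8 * (K ^ ε / ε))) := by gcongr; linarith
    _ = (82 + 640 / ε) * K ^ (4 + ε) := by rw [h6]; ring

theorem green_ruzsa_freiman (ε : ℝ) (hε : 0 < ε) :
    ∃ C : ℝ, 0 < C ∧
      ∀ (G : Type) [AddCommGroup G] [DecidableEq G] (A : Finset G) (K : ℝ),
        A.Nonempty → 1 ≤ K → ((A + A).card : ℝ) ≤ K * A.card →
        ∃ (d : ℕ) (H : AddSubgroup G) (b s : Fin d → G) (len : Fin d → ℕ)
          (M : Set G),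
          (H : Set G).Finite ∧
          (d : ℝ) ≤ C * K ^ (4 + ε) ∧
          M = (H : Set G) +
              (∑ i : Fin d, {y : G | ∃ j : ℕ, j < len i ∧ y = b i + j • s i}) ∧
          (↑A : Set G) ⊆ M ∧
          (M.ncard : ℝ) ≤ Real.exp (C * K ^ (4 + ε)) * A.card := by
  refine ⟨82 + 640 / ε, by positivity, fun G _ _ A K hA hK hAK => ?_⟩
  have hbound := floor_pow_mul_log_le hε hK
  obtain ⟨a, ha⟩ := hA
  set A' := {-a} + A with hA'
  have hcard : A'.card = A.card := Finset.card_singleton_add _ _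
  have hA'0 : 0 ∈ A' := Finset.mem_add.2 ⟨-a, Finset.mem_singleton_self _, a, ha, neg_add_cancel a⟩
  have hA'K : ((A' + A').card : ℝ) ≤ K * A'.card := by
    rw [hcard, hA', add_add_add_comm, Finset.singleton_add_singleton, Finset.card_singleton_add]
    exact hAK
  obtain ⟨T, hTA, hT, hcov, hgrow⟩ := exists_cover_of_doubling ⟨0, hA'0⟩ hK hA'K
  set m := ⌊K ^ 4⌋₊ with hm
  have hm1 : 1 ≤ m := Nat.le_floor (by simpa using one_le_pow₀ hK)
  obtain ⟨d, H, b, s, len, hH, hd, hsub, hsize⟩ := exists_subset_coset_progression hm1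
    (L := Nat.log 2 m + 1) (Nat.lt_pow_succ_log_self (by norm_num) m) hA'0 hTA hT hcov hgrow
  set L := Nat.log 2 m + 1 with hL
  have hbound' : ((2 * m + 80 * m * L : ℕ) : ℝ) ≤ (82 + 640 / ε) * K ^ (4 + ε) := by
    push_cast [hL]
    exact hbound
  refine ⟨d + 1, H, Fin.cons a b, Fin.cons 0 s, Fin.cons 1 len, _, hH, ?_, rfl, ?_, ?_⟩
  · refine le_trans (Nat.cast_le.2 ?_) hbound'
    have : 40 * m * L ≤ 80 * m * L := by gcongr; norm_num
    omega
  · intro x hx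
    have hxA : -a + x ∈ A' := Finset.add_mem_add (Finset.mem_singleton_self _) hx
    obtain ⟨h, hh, y, hy, hxy⟩ := hsub hxA
    refine ⟨h, hh, a + y, ?_, ?_⟩
    · rw [Fin.sum_univ_succ]
      refine Set.add_mem_add ⟨0, by simp, by simp⟩ ?_
      simpa using hy
    · change h + y = -a + x at hxy
      change h + (a + y) = x
      rw [add_left_comm, hxy, add_neg_cancel_left]
  · have h1 := ncard_coset_progression_le hH (Fin.cons a b : Fin (d + 1) → G) (Fin.cons 0 s)
      (Fin.cons 1 len)
    rw [Fin.prod_univ_succ (n := d)] at h1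
    simp only [Fin.cons_zero, Fin.cons_succ, one_mul] at h1
    have h2 := h1.trans hsize
    rw [hcard] at h2
    have h3 : (2 : ℝ) ^ (m + 80 * m * L) ≤ Real.exp ((82 + 640 / ε) * K ^ (4 + ε)) := by
      calc (2 : ℝ) ^ (m + 80 * m * L) ≤ Real.exp 1 ^ (m + 80 * m * L) := by
            gcongr
            have := Real.add_one_le_exp (1 : ℝ)
            linarith
        _ = Real.exp ((m + 80 * m * L : ℕ) : ℝ) := by rw [← Real.exp_nat_mul, mul_one]
        _ ≤ _ := Real.exp_le_exp.2 (le_trans (Nat.cast_le.2 (by omega)) hbound')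
    refine le_trans (Nat.cast_le.2 h2) ?_
    push_cast
    exact mul_le_mul_of_nonneg_right h3 (Nat.cast_nonneg _)
end

section
/- For every finite field F and every integer r ≥ 3 there is a constant C = C(|F|, r) > 0 such that for every n ≥ 1 the following holds: if a₁, …, a_r ∈ F∖{0} satisfy a₁ + ⋯ + a_r = 0 and A ⊆ F^n contains no solution to a₁·x₁ + ⋯ + a_r·x_r = 0 with x₁, …, x_r ∈ A pairwise distinct, then |A| ≤ C·|F|^n / n^{r−2}. -/
open Finset Module

section RothMeshulam

variable {F V ι : Type*} [Field F] [AddCommGroup V] [Module F V]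

/-- `A` contains no solution to `∑ i, a i • x i = 0` in pairwise distinct elements. -/
def DistinctSolutionFree [Fintype ι] (a : ι → F) (A : Finset V) : Prop :=
  ¬ ∃ x : ι → V, (∀ i, x i ∈ A) ∧ Function.Injective x ∧ ∑ i, a i • x i = 0

/-- The exponential sum of `A` at the linear functional `φ`, with respect to the additive
character `ψ` of the base field. -/
noncomputable def expSum (ψ : AddChar F ℂ) (A : Finset V) (φ : Dual F V) : ℂ :=
  ∑ x ∈ A, ψ (φ x)

theorem sum_dual_addChar_apply [Fintype V] [DecidableEq V] [Fintype (Dual F V)]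
    [FiniteDimensional F V] {ψ : AddChar F ℂ} (hψ : ψ ≠ 1) (v : V) :
    ∑ φ : Dual F V, ψ (φ v) = if v = 0 then (Fintype.card V : ℂ) else 0 := by
  have hcard : Fintype.card (Dual F V) = Fintype.card V :=
    (Fintype.card_congr (LinearEquiv.ofFinrankEq V (Dual F V)
      Subspace.dual_finrank_eq.symm).toEquiv).symm
  split_ifs with h
  · simp [h, hcard]
  · let χ : AddChar (Dual F V) ℂ :=
      ψ.compAddMonoidHom (Dual.eval F V v).toAddMonoidHom
    have hχ : χ ≠ 1 := by
      obtain ⟨t, ht⟩ := AddChar.ne_one_iff.1 hψ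
      obtain ⟨f, hf⟩ := Module.Projective.exists_dual_ne_zero F h
      refine AddChar.ne_one_iff.2 ⟨(t / f v) • f, ?_⟩
      simpa [χ, hf] using ht
    exact AddChar.sum_eq_zero_of_ne_one hχ

theorem card_mul_card_solutions_eq_sum [Fintype V] [DecidableEq V] [Fintype (Dual F V)]
    [FiniteDimensional F V] [Fintype ι] [DecidableEq ι] {ψ : AddChar F ℂ} (hψ : ψ ≠ 1)
    (a : ι → F) (A : Finset V) :
    (Fintype.card V : ℂ) * #{x ∈ Fintype.piFinset fun _ : ι => A | ∑ i, a i • x i = 0} =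
      ∑ φ : Dual F V, ∏ i, expSum ψ A (a i • φ) := by
  simp_rw [expSum, Finset.prod_univ_sum]
  rw [Finset.sum_comm]
  have key : ∀ x : ι → V, ∑ φ : Dual F V, ∏ i, ψ ((a i • φ) (x i)) =
      if ∑ i, a i • x i = 0 then (Fintype.card V : ℂ) else 0 := by
    intro x
    rw [← sum_dual_addChar_apply hψ]
    refine sum_congr rfl fun φ _ => ?_
    have h := map_prod ψ.toMonoidHom (fun i => Multiplicative.ofAdd (φ (a i • x i))) univ
    rw [← ofAdd_sum, ← map_sum] at h
    refine Eq.trans ?_ h.symm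
    refine prod_congr rfl fun i _ => ?_
    rw [map_smul]
    rfl
  simp_rw [key]
  rw [← Finset.sum_filter, Finset.sum_const, nsmul_eq_mul, mul_comm]

theorem sum_norm_sq_expSum_smul [Fintype V] [Fintype (Dual F V)] [Finite F]
    [FiniteDimensional F V] {ψ : AddChar F ℂ} (hψ : ψ ≠ 1) {c : F} (hc : c ≠ 0)
    (A : Finset V) :
    ∑ φ : Dual F V, ‖expSum ψ A (c • φ)‖ ^ 2 = (Fintype.card V : ℝ) * #A := by
  classical
  have h : ∀ φ : Dual F V, ((‖expSum ψ A (c • φ)‖ ^ 2 : ℝ) : ℂ) =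
      ∑ x ∈ A, ∑ y ∈ A, ψ (φ (c • (x - y))) := by
    intro φ
    push_cast
    rw [← Complex.mul_conj', expSum, map_sum, Finset.sum_mul_sum]
    refine sum_congr rfl fun x _ => sum_congr rfl fun y _ => ?_
    rw [← AddChar.map_neg_eq_conj, ← AddChar.map_add_eq_mul]
    congr 1
    simp
    ring
  apply Complex.ofReal_injective
  rw [Complex.ofReal_sum]
  simp_rw [h]
  rw [Finset.sum_comm]
  have h2 : ∀ x ∈ A, ∑ φ : Dual F V, ∑ y ∈ A, ψ (φ (c • (x - y))) = Fintype.card V := by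
    intro x hx
    rw [Finset.sum_comm]
    simp_rw [sum_dual_addChar_apply hψ, smul_eq_zero, hc, false_or, sub_eq_zero]
    simp [hx]
  rw [sum_congr rfl h2]
  simp [mul_comm]

/-- Solutions with two prescribed coordinates equal are determined by the coordinates other
than one of these two and one further coordinate. -/
theorem card_solutions_eq_coord_le [Fintype V] [DecidableEq V] [Fintype ι] [DecidableEq ι]
    {k : ℕ} (hk : 1 ≤ k) (hι : Fintype.card ι = k + 2) {a : ι → F} (ha : ∀ i, a i ≠ 0)
    {i j : ι} (hij : i ≠ j) :
    #{x : ι → V | x i = x j ∧ ∑ m, a m • x m = 0} ≤ Fintype.card V ^ k := by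
  obtain ⟨l, hl⟩ : ∃ l, l ∉ ({i, j} : Finset ι) := by
    by_contra! h
    have := Finset.card_le_card (fun x _ => h x : (univ : Finset ι) ⊆ {i, j})
    rw [Finset.card_univ, Finset.card_pair hij] at this
    omega
  simp only [mem_insert, mem_singleton, not_or] at hl
  let s : Finset ι := univ \ {j, l}
  have hs : #s = k := by
    rw [Finset.card_sdiff_of_subset (subset_univ _), Finset.card_univ, hι,
      Finset.card_pair (Ne.symm hl.2)]
    omega
  have : Fintype.card (s → V) = Fintype.card V ^ k := by simp [hs]
  rw [← this, ← Finset.card_univ]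
  refine Finset.card_le_card_of_injOn (fun x m => x m) (fun _ _ => mem_coe.2 (mem_univ _)) ?_
  intro x hx y hy hxy
  simp only [coe_filter, mem_univ, true_and, Set.mem_ofPred_eq] at hx hy
  have hout : ∀ m, m ≠ j → m ≠ l → x m = y m := fun m h1 h2 =>
    congrFun hxy ⟨m, by simp [s, h1, h2]⟩
  have hj : x j = y j := by rw [← hx.1, ← hy.1, hout i hij (Ne.symm hl.1)]
  have hne : ∀ m, m ≠ l → x m = y m := fun m hm => by
    by_cases h : m = j
    · rw [h, hj]
    · exact hout m h hm
  have hlast : x l = y l := by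
    have h := hx.2.trans hy.2.symm
    rw [← Finset.add_sum_erase _ _ (mem_univ l), ← Finset.add_sum_erase _ _ (mem_univ l),
      Finset.sum_congr rfl fun m hm => by rw [hne m (Finset.ne_of_mem_erase hm)]] at h
    exact smul_right_injective V (ha l) (add_right_cancel h)
  funext m
  by_cases h : m = l
  · rw [h, hlast]
  · exact hne m h

theorem DistinctSolutionFree.card_solutions_le [Fintype V] [DecidableEq V] [Fintype ι]
    [DecidableEq ι] {k : ℕ} (hk : 1 ≤ k) (hι : Fintype.card ι = k + 2) {a : ι → F}
    (ha : ∀ i, a i ≠ 0) {A : Finset V} (hA : DistinctSolutionFree a A) :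
    #{x ∈ Fintype.piFinset fun _ : ι => A | ∑ i, a i • x i = 0} ≤
      (k + 2) ^ 2 * Fintype.card V ^ k := by
  have hsub : {x ∈ Fintype.piFinset fun _ : ι => A | ∑ i, a i • x i = 0} ⊆
      (univ : Finset ι).offDiag.biUnion fun p =>
        {x : ι → V | x p.1 = x p.2 ∧ ∑ m, a m • x m = 0} := by
    intro x hx
    simp only [mem_filter, Fintype.mem_piFinset] at hx
    have hinj : ¬ Function.Injective x := fun h => hA ⟨x, hx.1, h, hx.2⟩
    simp only [Function.Injective, not_forall] at hinj
    obtain ⟨i, j, hxij, hij⟩ := hinj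
    simp only [mem_biUnion, mem_offDiag, mem_univ, true_and, mem_filter]
    exact ⟨(i, j), hij, hxij, hx.2⟩
  refine (Finset.card_le_card hsub).trans ?_
  refine (Finset.card_biUnion_le_card_mul _ _ (Fintype.card V ^ k) fun p hp =>
    card_solutions_eq_coord_le hk hι ha (mem_offDiag.1 hp).2.2).trans ?_
  gcongr
  rw [offDiag_card, Finset.card_univ, hι, sq]
  exact Nat.sub_le _ _

/-- A set without solutions in distinct elements whose nontrivial exponential sums are all small
must itself be small. -/
theorem DistinctSolutionFree.card_pow_le [Fintype V] [Finite F] [FiniteDimensional F V] {k : ℕ}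
    (hk : 1 ≤ k) {a : Fin (k + 2) → F} (ha : ∀ i, a i ≠ 0) {A : Finset V}
    (hA : DistinctSolutionFree a A) {ψ : AddChar F ℂ} (hψ : ψ ≠ 1) {M : ℝ}
    (hM : ∀ φ : Dual F V, φ ≠ 0 → ‖expSum ψ A φ‖ ≤ M) (hM0 : 0 ≤ M) :
    (#A : ℝ) ^ (k + 2) ≤
      (k + 2) ^ 2 * (Fintype.card V : ℝ) ^ (k + 1) + M ^ k * (Fintype.card V * #A) := by
  classical
  have : Finite (Dual F V) := Module.finite_of_finite F
  have : Fintype (Dual F V) := Fintype.ofFinite _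
  have hcount := card_mul_card_solutions_eq_sum (V := V) hψ a A
  have hsol := hA.card_solutions_le hk (by simp) ha
  set T := #{x ∈ Fintype.piFinset fun _ : Fin (k + 2) => A | ∑ i, a i • x i = 0}
  rw [← Finset.add_sum_erase _ _ (mem_univ (0 : Dual F V))] at hcount
  have hzero : ∏ i, expSum ψ A (a i • (0 : Dual F V)) = (#A : ℂ) ^ (k + 2) := by
    simp [expSum]
  rw [hzero] at hcount
  set E := ∑ φ ∈ (univ : Finset (Dual F V)).erase 0, ∏ i, expSum ψ A (a i • φ)
  have hE : ‖E‖ ≤ M ^ k * (Fintype.card V * #A) := by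
    have hterm : ∀ φ ∈ (univ : Finset (Dual F V)).erase 0, ‖∏ i, expSum ψ A (a i • φ)‖ ≤
        M ^ k * ((‖expSum ψ A (a 0 • φ)‖ ^ 2 + ‖expSum ψ A (a 1 • φ)‖ ^ 2) / 2) := by
      intro φ hφ
      rw [norm_prod, Fin.prod_univ_succ, Fin.prod_univ_succ, ← mul_assoc, mul_comm]
      have hprod : ∏ i : Fin k, ‖expSum ψ A (a i.succ.succ • φ)‖ ≤ M ^ k := by
        calc _ ≤ ∏ _i : Fin k, M := Finset.prod_le_prod (fun _ _ => norm_nonneg _)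
              fun i _ => hM _ (smul_ne_zero (ha _) (Finset.ne_of_mem_erase hφ))
          _ = M ^ k := by simp
      refine mul_le_mul hprod ?_ (by positivity) (by positivity)
      have := two_mul_le_add_sq ‖expSum ψ A (a 0 • φ)‖ ‖expSum ψ A (a 1 • φ)‖
      simp only [Fin.succ_zero_eq_one]
      linarith
    calc ‖E‖ ≤ _ := norm_sum_le_of_le _ hterm
      _ ≤ ∑ φ : Dual F V,
          M ^ k * ((‖expSum ψ A (a 0 • φ)‖ ^ 2 + ‖expSum ψ A (a 1 • φ)‖ ^ 2) / 2) :=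
        Finset.sum_le_sum_of_subset_of_nonneg (subset_univ _) fun _ _ _ => by positivity
      _ = M ^ k * (Fintype.card V * #A) := by
        rw [← Finset.mul_sum, ← Finset.sum_div, Finset.sum_add_distrib,
          sum_norm_sq_expSum_smul hψ (ha 0), sum_norm_sq_expSum_smul hψ (ha 1)]
        ring
  have hmain : (#A : ℝ) ^ (k + 2) ≤ Fintype.card V * T + ‖E‖ := by
    have h : (#A : ℂ) ^ (k + 2) = Fintype.card V * T - E := by rw [hcount]; ring
    calc (#A : ℝ) ^ (k + 2) = ‖(#A : ℂ) ^ (k + 2)‖ := by simp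
      _ ≤ ‖(Fintype.card V : ℂ) * T‖ + ‖E‖ := by rw [h]; exact norm_sub_le _ _
      _ = _ := by simp
  have hsol' : (T : ℝ) ≤ (k + 2) ^ 2 * (Fintype.card V : ℝ) ^ k := by exact_mod_cast hsol
  calc (#A : ℝ) ^ (k + 2) ≤ Fintype.card V * T + ‖E‖ := hmain
    _ ≤ Fintype.card V * ((k + 2) ^ 2 * (Fintype.card V : ℝ) ^ k) +
        M ^ k * (Fintype.card V * #A) := by gcongr
    _ = _ := by ring

/-- If no fibre of `φ` contains many more elements of `A` than average, then the exponential sum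
of `A` at `φ` is small. -/
theorem norm_expSum_le [Fintype F] [DecidableEq F] {ψ : AddChar F ℂ} (hψ : ψ ≠ 1)
    (A : Finset V) (φ : Dual F V) {M : ℝ}
    (hM : ∀ t, (Fintype.card F : ℝ) * #{x ∈ A | φ x = t} ≤ #A + M) :
    ‖expSum ψ A φ‖ ≤ M := by
  have hq : (0 : ℝ) < Fintype.card F := by exact_mod_cast Fintype.card_pos
  set B : ℝ := (#A + M) / Fintype.card F with hB
  have hsum : expSum ψ A φ = ∑ t : F, ((#{x ∈ A | φ x = t} : ℝ) - B : ℝ) * ψ t := by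
    have h0 : ∑ t : F, ψ t = 0 := AddChar.sum_eq_zero_of_ne_one hψ
    push_cast
    simp_rw [sub_mul]
    rw [Finset.sum_sub_distrib, ← Finset.mul_sum, h0, mul_zero, sub_zero, expSum,
      ← Finset.sum_fiberwise A φ]
    refine sum_congr rfl fun t _ => ?_
    rw [Finset.sum_congr rfl fun x hx => by rw [(mem_filter.1 hx).2], Finset.sum_const,
      nsmul_eq_mul]
  have hcard : ∑ t : F, (#{x ∈ A | φ x = t} : ℝ) = #A := by
    exact_mod_cast (Finset.card_eq_sum_card_fiberwise (f := φ) (s := A) (t := univ)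
      fun _ _ => mem_coe.2 (mem_univ _)).symm
  calc ‖expSum ψ A φ‖ ≤ ∑ t : F, (B - #{x ∈ A | φ x = t}) := by
        rw [hsum]
        refine norm_sum_le_of_le _ fun t _ => ?_
        rw [norm_mul, AddChar.norm_apply, mul_one, Complex.norm_real, Real.norm_eq_abs,
          abs_of_nonpos, neg_sub]
        rw [sub_nonpos, hB, le_div_iff₀ hq, mul_comm]
        exact hM t
    _ = M := by
        rw [Finset.sum_sub_distrib, hcard, Finset.sum_const, Finset.card_univ, nsmul_eq_mul, hB]
        field_simp
        ring

/-- A fibre of `φ` in a solution-free set can be translated to a solution-free subset of the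
kernel of `φ`. -/
theorem DistinctSolutionFree.exists_ker [Fintype V] [DecidableEq F] [Fintype ι] {a : ι → F}
    (hsum : ∑ i, a i = 0) {A : Finset V} (hA : DistinctSolutionFree a A) {φ : Dual F V}
    (hφ : φ ≠ 0) (t : F) :
    ∃ B : Finset (LinearMap.ker φ), DistinctSolutionFree a B ∧ #B = #{x ∈ A | φ x = t} := by
  classical
  obtain ⟨v, hv⟩ := LinearMap.surjective hφ t
  refine ⟨({y | (y : V) + v ∈ A} : Finset (LinearMap.ker φ)), ?_, ?_⟩
  · rintro ⟨x, hxA, hinj, hx⟩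
    refine hA ⟨fun i => x i + v, fun i => by simpa using hxA i, fun i j hij => hinj ?_, ?_⟩
    · exact Subtype.ext (add_right_cancel hij)
    · have h := congrArg (Submodule.subtype _) hx
      simp only [map_sum, map_smul, Submodule.subtype_apply, map_zero] at h
      simp only [smul_add, Finset.sum_add_distrib, h, ← Finset.sum_smul, hsum, zero_smul,
        add_zero]
  · refine Finset.card_bij (fun y _ => (y : V) + v) ?_ ?_ ?_
    · intro y hy
      simpa [hv] using hy
    · intro y _ z _ h
      exact Subtype.ext (add_right_cancel h)
    · intro x hx
      rw [mem_filter] at hx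
      exact ⟨⟨x - v, by simp [hx.2, hv]⟩, by simpa using hx.1, by simp⟩

end RothMeshulam

theorem exists_pow_le_mul_two_pow (m : ℕ) : ∃ L : ℝ, 0 < L ∧ ∀ n : ℕ, (n : ℝ) ^ m ≤ L * 2 ^ n := by
  obtain ⟨L, hL⟩ := (tendsto_pow_const_div_const_pow_of_one_lt m
    (one_lt_two : (1 : ℝ) < 2)).bddAbove_range
  refine ⟨max L 1, by positivity, fun n => ?_⟩
  rw [← div_le_iff₀ (by positivity)]
  exact (hL ⟨n, rfl⟩).trans (le_max_left _ _)

theorem one_div_pow_sub_one_div_succ_pow_le (k : ℕ) {m : ℕ} (hm : 1 ≤ m) :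
    1 / (m : ℝ) ^ k - 1 / ((m : ℝ) + 1) ^ k ≤ k * 2 ^ k / ((m : ℝ) + 1) ^ (k + 1) := by
  have hm' : (1 : ℝ) ≤ m := by exact_mod_cast hm
  have hm0 : (0 : ℝ) < m := by linarith
  have hbern : 1 - ((m : ℝ) / (m + 1)) ^ k ≤ k / (m + 1) := by
    have h := one_add_mul_le_pow (a := -(1 / ((m : ℝ) + 1))) (by
      have : 1 / ((m : ℝ) + 1) ≤ 1 := by rw [div_le_one (by positivity)]; linarith
      linarith) k
    have h2 : 1 + -(1 / ((m : ℝ) + 1)) = m / (m + 1) := by field_simp; ring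
    rw [h2] at h
    have h3 : (k : ℝ) * -(1 / ((m : ℝ) + 1)) = -(k / (m + 1)) := by ring
    linarith
  have hdouble : 1 / (m : ℝ) ^ k ≤ 2 ^ k / ((m : ℝ) + 1) ^ k := by
    rw [div_le_div_iff₀ (by positivity) (by positivity), one_mul, ← mul_pow]
    gcongr
    linarith
  calc 1 / (m : ℝ) ^ k - 1 / ((m : ℝ) + 1) ^ k
      = 1 / (m : ℝ) ^ k * (1 - ((m : ℝ) / (m + 1)) ^ k) := by rw [div_pow]; field_simp
    _ ≤ 1 / (m : ℝ) ^ k * (k / (m + 1)) := by gcongr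
    _ ≤ 2 ^ k / ((m : ℝ) + 1) ^ k * (k / (m + 1)) := by gcongr
    _ = _ := by rw [pow_succ]; field_simp

/-- One step of the density increment, phrased for densities `δ` in dimension `m + 1`. -/
theorem density_le_of_increment {k m : ℕ} (hm : 1 ≤ m) {C L N δ ε : ℝ} (hC1 : 1 ≤ C)
    (hCK : 2 * ((k : ℝ) * 2 ^ k) ^ k ≤ C) (hCL : 2 * (k + 2) ^ 2 * L ≤ C)
    (hL : ((m : ℝ) + 1) ^ (k * (k + 2)) ≤ L * N) (hN : 0 < N)
    (hε : ε = C / (m : ℝ) ^ k - C / ((m : ℝ) + 1) ^ k) (hε0 : 0 ≤ ε)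
    (hδ : δ ^ (k + 2) ≤ (k + 2) ^ 2 / N + ε ^ k * δ) :
    δ ≤ C / ((m : ℝ) + 1) ^ k := by
  by_contra! hlt
  set n : ℝ := (m : ℝ) + 1
  have hn : 0 < n := by positivity
  have hδ0 : 0 < δ := lt_trans (by positivity) hlt
  have hεle : ε ≤ C * (k * 2 ^ k / n ^ (k + 1)) := by
    rw [hε]
    calc C / (m : ℝ) ^ k - C / n ^ k = C * (1 / (m : ℝ) ^ k - 1 / n ^ k) := by ring
      _ ≤ _ := by gcongr; exact one_div_pow_sub_one_div_succ_pow_le k hm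
  have hεk : ε ^ k ≤ δ ^ (k + 1) / 2 := by
    calc ε ^ k ≤ (C * (k * 2 ^ k / n ^ (k + 1))) ^ k := by gcongr
      _ = C ^ k * (2 * (k * 2 ^ k) ^ k) / (n ^ k) ^ (k + 1) / 2 := by
        rw [mul_pow, div_pow, ← pow_mul, ← pow_mul, mul_comm k (k + 1)]
        field_simp
      _ ≤ C ^ k * C / (n ^ k) ^ (k + 1) / 2 := by gcongr
      _ = (C / n ^ k) ^ (k + 1) / 2 := by rw [div_pow, pow_succ C]
      _ ≤ δ ^ (k + 1) / 2 := by gcongr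
  have hdeg : (k + 2) ^ 2 / N < δ ^ (k + 2) / 2 := by
    calc (k + 2) ^ 2 / N ≤ C / n ^ (k * (k + 2)) / 2 := by
          rw [div_div, div_le_div_iff₀ hN (by positivity)]
          calc ((k : ℝ) + 2) ^ 2 * (n ^ (k * (k + 2)) * 2)
              ≤ (k + 2) ^ 2 * (L * N * 2) := by gcongr
            _ = 2 * (k + 2) ^ 2 * L * N := by ring
            _ ≤ C * N := by gcongr
      _ ≤ C ^ (k + 2) / n ^ (k * (k + 2)) / 2 := by
          gcongr
          exact le_self_pow₀ hC1 (by omega)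
      _ = (C / n ^ k) ^ (k + 2) / 2 := by rw [div_pow, ← pow_mul]
      _ < δ ^ (k + 2) / 2 := by gcongr
  have : ε ^ k * δ ≤ δ ^ (k + 2) / 2 := by
    calc ε ^ k * δ ≤ δ ^ (k + 1) / 2 * δ := by gcongr
      _ = _ := by ring
  linarith

theorem DistinctSolutionFree.card_le {F : Type*} [Field F] [Fintype F] {k : ℕ} (hk : 1 ≤ k)
    {a : Fin (k + 2) → F} (ha : ∀ i, a i ≠ 0) (hsum : ∑ i, a i = 0) {C L : ℝ} (hC1 : 1 ≤ C)
    (hCK : 2 * ((k : ℝ) * 2 ^ k) ^ k ≤ C) (hCL : 2 * (k + 2) ^ 2 * L ≤ C) (hL0 : 0 < L)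
    (hL : ∀ n : ℕ, (n : ℝ) ^ (k * (k + 2)) ≤ L * 2 ^ n) {n : ℕ} (hn : 1 ≤ n) :
    ∀ {V : Type*} [AddCommGroup V] [Module F V] [Finite V], finrank F V = n →
      ∀ {A : Finset V}, DistinctSolutionFree a A →
        (#A : ℝ) ≤ C / (n : ℝ) ^ k * (Fintype.card F : ℝ) ^ n := by
  classical
  obtain ⟨ψ, hψ⟩ : ∃ ψ : AddChar F ℂ, ψ ≠ 1 := by
    obtain ⟨ψ, h⟩ := (AddChar.exists_apply_ne_zero (a := (1 : F))).2 one_ne_zero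
    exact ⟨ψ, AddChar.ne_one_iff.2 ⟨1, h⟩⟩
  have hq0 : (0 : ℝ) < Fintype.card F := by exact_mod_cast Fintype.card_pos
  have hq2 : (2 : ℝ) ≤ Fintype.card F := by exact_mod_cast Fintype.one_lt_card
  induction n, hn using Nat.le_induction with
  | base =>
    intro V _ _ _ hV A _
    have := Fintype.ofFinite V
    have hA : #A ≤ Fintype.card F ^ 1 := by
      rw [← hV, ← Module.card_eq_pow_finrank (K := F) (V := V)]
      exact Finset.card_le_univ A
    have hA' : (#A : ℝ) ≤ (Fintype.card F : ℝ) ^ 1 := by exact_mod_cast hA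
    simp only [Nat.cast_one, one_pow, div_one]
    nlinarith
  | succ m hm ih =>
    intro V _ _ _ hV A hA
    have := Fintype.ofFinite V
    have hfd : FiniteDimensional F V := Module.Finite.of_finite
    have hcard : (Fintype.card V : ℝ) = (Fintype.card F : ℝ) ^ (m + 1) := by
      rw [Module.card_eq_pow_finrank (K := F) (V := V), hV, Nat.cast_pow]
    rw [← hcard]
    set N : ℝ := (Fintype.card V : ℝ)
    have hN : 0 < N := by rw [hcard]; positivity
    have hm0 : (0 : ℝ) < m := by exact_mod_cast hm
    set ε : ℝ := C / (m : ℝ) ^ k - C / ((m : ℝ) + 1) ^ k with hε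
    have hε0 : 0 ≤ ε := by
      rw [hε, sub_nonneg]
      gcongr
      linarith
    push_cast
    rw [← div_le_iff₀ hN]
    by_contra! hlt
    have hfour : ∀ φ : Dual F V, φ ≠ 0 → ‖expSum ψ A φ‖ ≤ ε * N := by
      intro φ hφ
      refine norm_expSum_le hψ A φ fun t => ?_
      obtain ⟨B, hB, hBcard⟩ := hA.exists_ker hsum hφ t
      have hker : finrank F (LinearMap.ker φ) = m := by
        have := Module.Dual.finrank_ker_add_one_of_ne_zero hφ
        omega
      have hB' := ih hker hB
      rw [← hBcard]
      rw [lt_div_iff₀ hN] at hlt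
      calc (Fintype.card F : ℝ) * #B
          ≤ Fintype.card F * (C / (m : ℝ) ^ k * (Fintype.card F : ℝ) ^ m) := by gcongr
        _ = C / ((m : ℝ) + 1) ^ k * N + ε * N := by rw [hε, hcard]; ring
        _ ≤ #A + ε * N := by gcongr
    have hpow := hA.card_pow_le hk ha hψ hfour (by positivity)
    refine hlt.not_ge (density_le_of_increment hm hC1 hCK hCL ?_ hN hε hε0 ?_)
    · calc ((m : ℝ) + 1) ^ (k * (k + 2)) ≤ L * 2 ^ (m + 1) := by exact_mod_cast hL (m + 1)
        _ ≤ L * N := by rw [hcard]; gcongr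
    · rw [div_pow, div_le_iff₀ (by positivity)]
      calc (#A : ℝ) ^ (k + 2) ≤ (k + 2) ^ 2 * N ^ (k + 1) + (ε * N) ^ k * (N * #A) := hpow
        _ = _ := by rw [mul_pow]; clear_value ε N; field_simp; ring

theorem liu_spencer_roth_meshulam
    (F : Type) [Field F] [Fintype F] (r : ℕ) (hr : 3 ≤ r) :
    ∃ C : ℝ, 0 < C ∧
      ∀ (n : ℕ), 1 ≤ n →
        ∀ (a : Fin r → F), (∀ i, a i ≠ 0) → (∑ i, a i) = 0 →
          ∀ A : Finset (Fin n → F),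
            (¬ ∃ x : Fin r → Fin n → F,
                (∀ i, x i ∈ A) ∧ Function.Injective x ∧ ∑ i, a i • x i = 0) →
            (A.card : ℝ) ≤ C * (Fintype.card F : ℝ) ^ n / (n : ℝ) ^ ((r : ℝ) - 2) := by
  obtain ⟨k, rfl⟩ : ∃ k, r = k + 2 := ⟨r - 2, by omega⟩
  obtain ⟨L, hL0, hL⟩ := exists_pow_le_mul_two_pow (k * (k + 2))
  set K : ℝ := 2 * ((k : ℝ) * 2 ^ k) ^ k
  set D : ℝ := 2 * (k + 2) ^ 2 * L
  have hK0 : 0 ≤ K := by positivity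
  have hD0 : 0 ≤ D := by positivity
  refine ⟨1 + K + D, by positivity, fun n hn a ha hsum A hA => ?_⟩
  have h := DistinctSolutionFree.card_le (C := 1 + K + D) (by omega) ha hsum (by linarith)
    (by linarith) (by linarith) hL0 hL hn (V := Fin n → F) (by simp) hA
  have hexp : (n : ℝ) ^ (((k + 2 : ℕ) : ℝ) - 2) = (n : ℝ) ^ k := by
    rw [← Real.rpow_natCast]
    congr 1
    push_cast
    ring
  rw [hexp]
  exact h.trans_eq (by ring)
end

section
/- There is an absolute constant C > 0 such that the following holds. Let G be an abelian group, let A ⊆ G be a finite nonempty set, and let c ∈ (0,1] be such that E(A) ≥ c·|A|³. Then there is a subset A′ ⊆ A such that |A′| ≥ c^C·|A|/C and |A′ + A′| ≤ C·c^{−C}·|A′|. -/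
open Pointwise

/-- The additive energy of a finite set: the number of quadruples `(s₁,s₂,s₃,s₄)`
with `s₁ + s₂ = s₃ + s₄`. -/
def addEnergy {G : Type*} [AddCommGroup G] [DecidableEq G] (S : Finset G) : ℕ :=
  (((S ×ˢ S) ×ˢ S ×ˢ S).filter fun p => p.1.1 + p.1.2 = p.2.1 + p.2.2).card

section BalogSzemerediGowers

open Finset hiding addEnergy

variable {G : Type*} [AddCommGroup G] [DecidableEq G]

/-- The intersection of `A` with its translate `x + A`. -/
def interTranslate (A : Finset G) (x : G) : Finset G := A.filter fun a => a - x ∈ A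

/-- The ordered pairs in `X` whose difference has fewer than `T` representations in `A - A`. -/
noncomputable def unpopularPairs (A X : Finset G) (T : ℝ) : Finset (G × G) :=
  open Classical in (X ×ˢ X).filter fun p => ((interTranslate A (p.1 - p.2)).card : ℝ) < T

lemma mem_interTranslate {A : Finset G} {x a : G} :
    a ∈ interTranslate A x ↔ a ∈ A ∧ a - x ∈ A := mem_filter

lemma mem_unpopularPairs {A X : Finset G} {T : ℝ} {p : G × G} :
    p ∈ unpopularPairs A X T ↔
      (p.1 ∈ X ∧ p.2 ∈ X) ∧ ((interTranslate A (p.1 - p.2)).card : ℝ) < T := by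
  simp [unpopularPairs]

lemma addEnergy_le_sum_sq_card_interTranslate (A : Finset G) :
    addEnergy A ≤ ∑ x ∈ A - A, (interTranslate A x).card ^ 2 := by
  unfold addEnergy
  rw [card_eq_sum_card_fiberwise (f := fun p : (G × G) × G × G => p.1.1 - p.2.1) (t := A - A)]
  · refine sum_le_sum fun x _ => ?_
    rw [sq, ← card_product]
    refine card_le_card_of_injOn (fun p => (p.1.1, p.2.2)) ?_ ?_
    · rintro ⟨⟨a, b⟩, d, e⟩ h
      simp only [coe_filter, mem_filter, mem_product, Set.mem_ofPred_eq] at h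
      obtain ⟨⟨⟨⟨ha, hb⟩, hd, he⟩, h⟩, rfl⟩ := h
      have h' : e - (a - d) = b := by
        rw [show e - (a - d) = d + e - a by abel, ← h, add_sub_cancel_left]
      simp [mem_interTranslate, ha, he, hd, h', hb]
    · rintro ⟨⟨a, b⟩, d, e⟩ h ⟨⟨a', b'⟩, d', e'⟩ h' heq
      simp only [coe_filter, mem_filter, mem_product, Set.mem_ofPred_eq] at h h'
      simp only [Prod.mk.injEq] at heq ⊢
      obtain ⟨rfl, rfl⟩ := heq
      have hd : d = d' := sub_right_injective (h.2.trans h'.2.symm)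
      subst hd
      exact ⟨⟨rfl, add_left_cancel (h.1.2.trans h'.1.2.symm)⟩, rfl, rfl⟩
  · rintro ⟨⟨a, b⟩, d, e⟩ h
    simp only [coe_filter, mem_product, Set.mem_ofPred_eq] at h
    exact mem_coe.2 (sub_mem_sub h.1.1.1 h.1.2.1)

lemma sum_card_interTranslate_le (A D : Finset G) :
    ∑ x ∈ D, (interTranslate A x).card ≤ A.card ^ 2 := by
  rw [sq, ← card_product, ← card_sigma]
  refine card_le_card_of_injOn (fun q => (q.2, q.2 - q.1)) ?_ ?_
  · rintro ⟨x, a⟩ h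
    simp only [coe_sigma, Set.mem_sigma_iff, mem_coe, mem_interTranslate] at h
    simpa using h.2
  · rintro ⟨x, a⟩ - ⟨y, b⟩ - h
    simp only [Prod.mk.injEq] at h
    obtain ⟨rfl, h⟩ := h
    rw [sub_right_injective h]

lemma sum_card_unpopularPairs_le (A D : Finset G) {T : ℝ} (hT : 0 ≤ T) :
    ∑ x ∈ D, ((unpopularPairs A (interTranslate A x) T).card : ℝ) ≤ T * (A.card : ℝ) ^ 2 := by
  have key : ∑ x ∈ D, (unpopularPairs A (interTranslate A x) T).card ≤
      ∑ p ∈ unpopularPairs A A T, (interTranslate A (p.1 - p.2)).card := by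
    rw [← card_sigma, ← card_sigma]
    refine card_le_card_of_injOn (fun q => ⟨q.2, q.2.1 - q.1⟩) ?_ ?_
    · rintro ⟨x, a, b⟩ h
      simp only [coe_sigma, Set.mem_sigma_iff, mem_coe, mem_unpopularPairs,
        mem_interTranslate] at h ⊢
      obtain ⟨-, ⟨⟨ha, hax⟩, hb, hbx⟩, hT⟩ := h
      refine ⟨⟨⟨ha, hb⟩, hT⟩, hax, ?_⟩
      rwa [show a - x - (a - b) = b - x by abel]
    · rintro ⟨x, p⟩ - ⟨y, q⟩ - h
      simp only [Sigma.mk.injEq, heq_eq_eq] at h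
      obtain ⟨rfl, h⟩ := h
      rw [sub_right_injective h]
  calc ∑ x ∈ D, ((unpopularPairs A (interTranslate A x) T).card : ℝ)
      ≤ ∑ p ∈ unpopularPairs A A T, ((interTranslate A (p.1 - p.2)).card : ℝ) := by
        exact_mod_cast key
    _ ≤ ∑ _p ∈ unpopularPairs A A T, T :=
        sum_le_sum fun p hp => (mem_unpopularPairs.1 hp).2.le
    _ = (unpopularPairs A A T).card * T := by simp
    _ ≤ (A.card : ℝ) ^ 2 * T := by
        gcongr
        rw [sq, ← Nat.cast_mul, ← card_product]
        exact_mod_cast card_le_card (filter_subset _ _)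
    _ = T * (A.card : ℝ) ^ 2 := mul_comm _ _

/-- A set of large additive energy has a large intersection with one of its translates in which
most differences are popular. -/
lemma exists_interTranslate_few_unpopularPairs {A : Finset G} {c : ℝ} (hA : A.Nonempty)
    (hc : 0 < c) (hE : c * (A.card : ℝ) ^ 3 ≤ addEnergy A) :
    ∃ X ⊆ A, c * A.card / 2 ≤ (X.card : ℝ) ∧
      8 * ((unpopularPairs A X (c * A.card / 16)).card : ℝ) ≤ (X.card : ℝ) ^ 2 := by
  set n : ℝ := (A.card : ℝ) with hn
  set r : G → ℝ := fun x => (interTranslate A x).card with hr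
  set u : G → ℝ := fun x => (unpopularPairs A (interTranslate A x) (c * n / 16)).card
  have hn0 : 0 ≤ n := Nat.cast_nonneg _
  have hEn : c * n ^ 3 ≤ ∑ x ∈ A - A, r x ^ 2 :=
    hE.trans (by simp only [hr]; exact_mod_cast addEnergy_le_sum_sq_card_interTranslate A)
  have hR : ∑ x ∈ A - A, r x ≤ n ^ 2 := by
    simp only [hr, hn]
    exact_mod_cast sum_card_interTranslate_le A (A - A)
  have hU : ∑ x ∈ A - A, u x ≤ c * n / 16 * n ^ 2 :=
    sum_card_unpopularPairs_le A (A - A) (by positivity)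
  obtain ⟨x, hx, hle⟩ : ∃ x ∈ A - A, 8 * u x + c * n / 2 * r x ≤ r x ^ 2 := by
    refine exists_le_of_sum_le (hA.sub hA) ?_
    rw [sum_add_distrib, ← mul_sum, ← mul_sum]
    have := mul_le_mul_of_nonneg_left hR (show 0 ≤ c * n / 2 by positivity)
    linarith
  have hu0 : 0 ≤ u x := Nat.cast_nonneg _
  have hrpos : 0 < r x := by
    obtain ⟨a, ha, b, hb, rfl⟩ := mem_sub.1 hx
    refine Nat.cast_pos.2 (card_pos.2 ⟨a, mem_interTranslate.2 ⟨ha, ?_⟩⟩)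
    rwa [sub_sub_cancel]
  refine ⟨interTranslate A x, filter_subset _ _, ?_, ?_⟩
  · exact le_of_mul_le_mul_right (show c * n / 2 * r x ≤ r x * r x by nlinarith) hrpos
  · have : 0 ≤ c * n / 2 * r x := by positivity
    change 8 * u x ≤ r x ^ 2
    linarith

/-- If at most an eighth of the pairs in `X` are unpopular, then at least half of the elements of
`X` are involved in few unpopular pairs. -/
lemma exists_subset_few_unpopular_neighbours {A X : Finset G} {T : ℝ}
    (h : 8 * ((unpopularPairs A X T).card : ℝ) ≤ (X.card : ℝ) ^ 2) :
    ∃ Y ⊆ X, (X.card : ℝ) / 2 ≤ Y.card ∧ ∀ a ∈ Y,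
      4 * ((X.filter fun b => (a, b) ∈ unpopularPairs A X T).card : ℝ) ≤ X.card := by
  classical
  set d : G → Finset G := fun a => X.filter fun b => (a, b) ∈ unpopularPairs A X T with hd
  set P : G → Prop := fun a => 4 * ((d a).card : ℝ) ≤ X.card
  refine ⟨X.filter P, filter_subset _ _, ?_, fun a ha => (mem_filter.1 ha).2⟩
  have hsum : ∑ a ∈ X, (d a).card ≤ (unpopularPairs A X T).card := by
    rw [← card_sigma]
    refine card_le_card_of_injOn (fun q => (q.1, q.2)) ?_ ?_
    · rintro ⟨a, b⟩ hab
      simp only [hd, coe_sigma, Set.mem_sigma_iff, mem_coe, mem_filter] at hab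
      exact hab.2.2
    · rintro ⟨a, b⟩ - ⟨a', b'⟩ - hab
      simpa using hab
  have hsumR : ∑ a ∈ X, ((d a).card : ℝ) ≤ (unpopularPairs A X T).card := by exact_mod_cast hsum
  have hlow : ((X.filter fun a => ¬ P a).card : ℝ) * (X.card / 4) ≤ ∑ a ∈ X, ((d a).card : ℝ) := by
    calc ((X.filter fun a => ¬ P a).card : ℝ) * (X.card / 4)
        = ∑ _a ∈ X.filter fun a => ¬ P a, (X.card : ℝ) / 4 := by simp
      _ ≤ ∑ a ∈ X.filter fun a => ¬ P a, ((d a).card : ℝ) := by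
          refine sum_le_sum fun a ha => ?_
          have := not_le.1 (mem_filter.1 ha).2
          linarith
      _ ≤ ∑ a ∈ X, ((d a).card : ℝ) :=
          sum_le_sum_of_subset_of_nonneg (filter_subset _ _) fun _ _ _ => Nat.cast_nonneg _
  have hcard : ((X.filter P).card : ℝ) + (X.filter fun a => ¬ P a).card = X.card := by
    exact_mod_cast card_filter_add_card_filter_not (s := X) P
  rcases X.eq_empty_or_nonempty with rfl | hX
  · simp
  have hXpos : (0 : ℝ) < X.card := Nat.cast_pos.2 hX.card_pos
  have : ((X.filter fun a => ¬ P a).card : ℝ) ≤ X.card / 2 :=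
    le_of_mul_le_mul_right (by nlinarith) hXpos
  linarith

lemma sum_card_interTranslate_mul_le (A B : Finset G) (a a' : G) :
    ∑ b ∈ B, (interTranslate A (a - b)).card * (interTranslate A (a' - b)).card ≤
      (((A ×ˢ A) ×ˢ A ×ˢ A).filter
        fun q => (q.1.1 - q.1.2) - (q.2.1 - q.2.2) = a - a').card := by
  simp_rw [← card_product]
  rw [← card_sigma]
  refine card_le_card_of_injOn
    (fun q => ((q.2.1, q.2.1 - (a - q.1)), (q.2.2, q.2.2 - (a' - q.1)))) ?_ ?_
  · rintro ⟨b, v, w⟩ h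
    simp only [coe_sigma, Set.mem_sigma_iff, mem_coe, mem_product, mem_interTranslate] at h
    simp only [coe_filter, mem_product, Set.mem_ofPred_eq]
    exact ⟨h.2, by abel⟩
  · rintro ⟨b, v, w⟩ - ⟨b', v', w'⟩ - h
    simp only [Prod.mk.injEq] at h
    obtain ⟨⟨rfl, h⟩, rfl, -⟩ := h
    rw [sub_right_injective (sub_right_injective h)]

lemma card_sub_mul_le_of_few_unpopular_neighbours {A X Y : Finset G} {T : ℝ} (hT : 0 ≤ T)
    (hYX : Y ⊆ X) (hY : ∀ a ∈ Y,
      4 * ((X.filter fun b => (a, b) ∈ unpopularPairs A X T).card : ℝ) ≤ X.card) :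
    ((Y - Y).card : ℝ) * (X.card / 2 * T ^ 2) ≤ (A.card : ℝ) ^ 4 := by
  classical
  set f : (G × G) × G × G → G := fun q => (q.1.1 - q.1.2) - (q.2.1 - q.2.2)
  set Q := (A ×ˢ A) ×ˢ A ×ˢ A with hQ
  have hfib : ∀ d ∈ Y - Y, (X.card : ℝ) / 2 * T ^ 2 ≤ (Q.filter fun q => f q = d).card := by
    intro d hd
    obtain ⟨a, ha, a', ha', rfl⟩ := mem_sub.1 hd
    set N : G → Finset G := fun a => X.filter fun b => (a, b) ∈ unpopularPairs A X T with hN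
    set B := X \ (N a ∪ N a') with hB
    have hBcard : (X.card : ℝ) / 2 ≤ B.card := by
      have h₁ : (X.card : ℝ) ≤ B.card + (N a ∪ N a').card := by
        exact_mod_cast card_le_card_sdiff_add_card
      have h₂ : ((N a ∪ N a').card : ℝ) ≤ (N a).card + (N a').card := by
        exact_mod_cast card_union_le _ _
      have h₃ := hY a ha
      have h₄ := hY a' ha'
      linarith
    have hpop {e b : G} (he : e ∈ X) (hb : b ∈ X) (h : b ∉ N e) :
        T ≤ (interTranslate A (e - b)).card := by
      by_contra! hlt
      exact h (mem_filter.2 ⟨hb, mem_unpopularPairs.2 ⟨⟨he, hb⟩, hlt⟩⟩)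
    calc (X.card : ℝ) / 2 * T ^ 2 ≤ B.card * T ^ 2 := by gcongr
      _ = ∑ _b ∈ B, T * T := by simp [sq]
      _ ≤ ∑ b ∈ B, ((interTranslate A (a - b)).card : ℝ) * (interTranslate A (a' - b)).card := by
          refine sum_le_sum fun b hb => ?_
          simp only [hB, mem_sdiff, mem_union, not_or] at hb
          exact mul_le_mul (hpop (hYX ha) hb.1 hb.2.1) (hpop (hYX ha') hb.1 hb.2.2) hT
            (Nat.cast_nonneg _)
      _ ≤ _ := by exact_mod_cast sum_card_interTranslate_mul_le A B a a'
  calc ((Y - Y).card : ℝ) * (X.card / 2 * T ^ 2)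
      = ∑ _d ∈ Y - Y, (X.card : ℝ) / 2 * T ^ 2 := by simp
    _ ≤ ∑ d ∈ Y - Y, ((Q.filter fun q => f q = d).card : ℝ) := sum_le_sum hfib
    _ ≤ Q.card := by
        rw [← Nat.cast_sum, sum_card_fiberwise_eq_card_filter]
        exact_mod_cast card_le_card (filter_subset _ _)
    _ = (A.card : ℝ) ^ 4 := by
        simp only [hQ, card_product, Nat.cast_mul]
        ring

/-- The Balog–Szemerédi–Gowers theorem for difference sets, with explicit exponents. -/
lemma exists_subset_card_sub_le {A : Finset G} {c : ℝ} (hA : A.Nonempty)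
    (hc : 0 < c) (hE : c * (A.card : ℝ) ^ 3 ≤ addEnergy A) :
    ∃ Y ⊆ A, c * A.card / 4 ≤ (Y.card : ℝ) ∧
      c ^ 4 * ((Y - Y).card : ℝ) ≤ 4096 * Y.card := by
  obtain ⟨X, hXA, hX, hbad⟩ := exists_interTranslate_few_unpopularPairs hA hc hE
  obtain ⟨Y, hYX, hYcard, hY⟩ := exists_subset_few_unpopular_neighbours hbad
  have hn : (0 : ℝ) < A.card := Nat.cast_pos.2 hA.card_pos
  have hsub := card_sub_mul_le_of_few_unpopular_neighbours (by positivity) hYX hY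
  refine ⟨Y, hYX.trans hXA, by linarith, ?_⟩
  set n : ℝ := (A.card : ℝ)
  have hle : ((Y - Y).card : ℝ) * (c * n / 2 / 2 * (c * n / 16) ^ 2) ≤ n ^ 4 :=
    le_trans (by gcongr) hsub
  have hdiff : c ^ 3 * ((Y - Y).card : ℝ) ≤ 1024 * n := by
    refine le_of_mul_le_mul_right ?_ (show 0 < n ^ 3 by positivity)
    linarith
  have := mul_le_mul_of_nonneg_left hdiff hc.le
  linarith

end BalogSzemerediGowers

theorem balog_szemeredi_gowers :
    ∃ C : ℝ, 0 < C ∧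
      ∀ (G : Type) [AddCommGroup G] [DecidableEq G] (A : Finset G) (c : ℝ),
        A.Nonempty → 0 < c → c ≤ 1 → c * (A.card : ℝ) ^ 3 ≤ (addEnergy A : ℝ) →
        ∃ A' : Finset G, A' ⊆ A ∧
          c ^ C * A.card / C ≤ (A'.card : ℝ) ∧
          ((A' + A').card : ℝ) ≤ C * c ^ (-C) * A'.card := by
  refine ⟨4096 ^ 2, by norm_num, fun G _ _ A c hA hc hc1 hE => ?_⟩
  obtain ⟨Y, hYA, hYcard, hsub⟩ := exists_subset_card_sub_le hA hc hE
  have hn : (0 : ℝ) < A.card := Nat.cast_pos.2 hA.card_pos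
  have hYpos : (0 : ℝ) < Y.card := lt_of_lt_of_le (by positivity) hYcard
  refine ⟨Y, hYA, ?_, ?_⟩
  · refine le_trans ?_ hYcard
    have hpow : c ^ ((4096 : ℝ) ^ 2) ≤ c := by
      simpa using Real.rpow_le_rpow_of_exponent_ge hc hc1 (show (1 : ℝ) ≤ 4096 ^ 2 by norm_num)
    gcongr
    norm_num
  · have hruzsa : ((Y + Y).card : ℝ) * Y.card ≤ (Y - Y).card * (Y - Y).card := by
      exact_mod_cast Finset.ruzsa_triangle_inequality_add_sub_sub Y Y Y
    have hpow : (c ^ 8)⁻¹ ≤ c ^ (-(4096 : ℝ) ^ 2) := by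
      rw [← Real.rpow_natCast, ← Real.rpow_neg hc.le]
      exact Real.rpow_le_rpow_of_exponent_ge hc hc1 (by norm_num)
    have hsq : c ^ 8 * ((Y + Y).card : ℝ) ≤ 4096 ^ 2 * Y.card := by
      refine le_of_mul_le_mul_right ?_ hYpos
      have := mul_self_le_mul_self (by positivity) hsub
      have := mul_le_mul_of_nonneg_left hruzsa (show 0 ≤ c ^ 8 by positivity)
      linarith
    calc ((Y + Y).card : ℝ) = (c ^ 8)⁻¹ * (c ^ 8 * (Y + Y).card) := by field_simp
      _ ≤ (c ^ 8)⁻¹ * (4096 ^ 2 * Y.card) := by gcongr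
      _ = 4096 ^ 2 * (c ^ 8)⁻¹ * Y.card := by ring
      _ ≤ _ := by gcongr
end
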